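/- Fix y ∈ ℝ² and let F be the unique holomorphic function on D₂ = {(b,x) ∈ S_a × ℂ² : |Im(x₁−x₂)| < 2a − Re b} agreeing with J₂(b;x,y) for real x. Set a_s = min(a₊,a₋), a_l = max(a₊,a₋), s_δ(z) = sinh(πz/a_δ) and e_δ(z) = exp(πz/a_δ) for δ ∈ {+,−}, where a_+ = a₊ and a_− = a₋. Then for all (b,x) with Re b ∈ (0,a_s) and |Im(x₁−x₂)| < a_s − Re b, and for δ ∈ {+,−}: (i) if s_δ(x₁−x₂) ≠ 0 then (s_δ(x₁−x₂−ib)/s_δ(x₁−x₂))·F(b,(x₁−ia_{−δ},x₂)) + (s_δ(x₂−x₁−ib)/s_δ(x₂−x₁))·F(b,(x₁,x₂−ia_{−δ})) = (e_δ(2y₁)+e_δ(2y₂))·F(b,x); and (ii) F(b,(x₁−ia_{−δ},x₂−ia_{−δ})) = e_δ(2y₁+2y₂)·F(b,x). Here a_{−δ} denotes a₋ when δ = + and a₊ when δ = −. -/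

import Mathlib

open MeasureTheory Complex

/-- `α = 2π/(a₊a₋)`. -/
noncomputable def alphaPar (ap am : ℝ) : ℝ := 2 * Real.pi / (ap * am)

/-- The function `g(a₊,a₋;z)` from the integral representation of the hyperbolic gamma
function. -/
noncomputable def ghyp (ap am : ℝ) (z : ℂ) : ℂ :=
  ∫ y in Set.Ioi (0 : ℝ),
    (1 / (y : ℂ)) *
      (Complex.sin (2 * (y : ℂ) * z) /
          (2 * Complex.sinh ((ap : ℂ) * (y : ℂ)) * Complex.sinh ((am : ℂ) * (y : ℂ))) -
        z / ((ap : ℂ) * (am : ℂ) * (y : ℂ)))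

/-- The hyperbolic gamma function `G(a₊,a₋;z) = exp(i g(a₊,a₋;z))`. -/
noncomputable def Ghyp (ap am : ℝ) (z : ℂ) : ℂ := Complex.exp (Complex.I * ghyp ap am z)

/-- The two-particle joint eigenfunction `J₂(b;x,y)` for real `x, y`. -/
noncomputable def J2 (ap am : ℝ) (b : ℂ) (x y : Fin 2 → ℝ) : ℂ :=
  Complex.exp (Complex.I * (alphaPar ap am : ℂ) * (y 1 : ℂ) * ((x 0 : ℂ) + (x 1 : ℂ))) *
    ∫ z : ℝ, Complex.exp (Complex.I * (alphaPar ap am : ℂ) * (z : ℂ) * ((y 0 : ℂ) - (y 1 : ℂ))) *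
      ∏ j : Fin 2,
        Ghyp ap am ((x j : ℂ) - (z : ℂ) - Complex.I * b / 2) /
          Ghyp ap am ((x j : ℂ) - (z : ℂ) + Complex.I * b / 2)

/-- The domain `D₂ = {(b,x) ∈ S_a × ℂ² : |Im(x₁−x₂)| < 2a − Re b}`. -/
def D2 (ap am : ℝ) : Set (ℂ × (Fin 2 → ℂ)) :=
  {p | (0 < p.1.re ∧ p.1.re < ap + am) ∧ |(p.2 0 - p.2 1).im| < ap + am - p.1.re}

/-!
The integrand of `J2` is a product of two copies of the ratio
`w(z) = G(z - ib/2) / G(z + ib/2)`. The first order difference equation of `G` says that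
`w(u - im/2) cosh(π(u - ib/2)/p) = w(u + im/2) cosh(π(u + ib/2)/p)` for `{p, m} = {a₊, a₋}`, and an
addition formula for `sinh` turns it into a pointwise relation between the four products
`w(u₀ ± im/2) w(u₁ ± im/2)`. Integrating this relation, with no shift of contour, gives the
corresponding relation between the integrals at the four points `(s₀ ± im/2, s₁ ± im/2)`.

Translating both coordinates by the same amount only multiplies the integral by a phase, so `F` is a
phase times the integral at points `(s₀, s₁)` with `|Im sⱼ| < (a₊ + a₋ - Re b)/2`. The three points
`x`, `x - im e₁`, `x - im e₂` of the difference equation are, up to such diagonal translations, the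
four points `(s₀ ± im/2, s₁ ± im/2)`, and the two ways to reach `x` produce the two exponentials in
the eigenvalue.
-/

section HyperbolicEstimates

theorem norm_le_mul_of_norm_deriv_le {f f' : ℂ → ℂ} (hf : ∀ v, HasDerivAt f (f' v) v)
    (hf0 : f 0 = 0) {C : ℝ} (w : ℂ)
    (hC : ∀ r ∈ Set.Icc (0 : ℝ) 1, ‖f' (r * w)‖ ≤ C) : ‖f w‖ ≤ C * ‖w‖ := by
  have hderiv : ∀ r ∈ Set.Icc (0 : ℝ) 1,
      HasDerivWithinAt (fun r : ℝ => f (r * w)) (f' (r * w) * w) (Set.Icc 0 1) r := by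
    intro r _
    have hline : HasDerivAt (fun r : ℝ => (r : ℂ) * w) w r := by
      simpa using (hasDerivAt_id (r : ℂ)).comp_ofReal.mul_const w
    exact ((hf _).comp r hline).hasDerivWithinAt
  have hbound := norm_image_sub_le_of_norm_deriv_le_segment_01' hderiv (C := C * ‖w‖)
    fun r hr => by
      rw [norm_mul]
      gcongr
      exact hC r (Set.Ico_subset_Icc_self hr)
  simpa [hf0] using hbound

theorem norm_exp_le (w : ℂ) : ‖exp w‖ ≤ Real.exp |w.re| := by
  rw [Complex.norm_exp]
  exact Real.exp_le_exp.2 (le_abs_self _)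

theorem norm_cosh_le (w : ℂ) : ‖cosh w‖ ≤ Real.exp |w.re| := by
  have hneg := norm_exp_le (-w)
  rw [neg_re, abs_neg] at hneg
  rw [Complex.cosh, norm_div, Complex.norm_ofNat]
  linarith [norm_add_le (exp w) (exp (-w)), norm_exp_le w]

theorem abs_re_ofReal_mul_le {r : ℝ} (hr : r ∈ Set.Icc (0 : ℝ) 1) (w : ℂ) :
    |((r : ℂ) * w).re| ≤ |w.re| := by
  rw [re_ofReal_mul, abs_mul, abs_of_nonneg hr.1]
  exact mul_le_of_le_one_left (abs_nonneg _) hr.2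

theorem norm_ofReal_mul_le {r : ℝ} (hr : r ∈ Set.Icc (0 : ℝ) 1) (w : ℂ) :
    ‖(r : ℂ) * w‖ ≤ ‖w‖ := by
  rw [norm_mul, norm_real, Real.norm_of_nonneg hr.1]
  exact mul_le_of_le_one_left (norm_nonneg _) hr.2

theorem norm_sinh_le (w : ℂ) : ‖sinh w‖ ≤ ‖w‖ * Real.exp |w.re| := by
  rw [mul_comm]
  refine norm_le_mul_of_norm_deriv_le Complex.hasDerivAt_sinh Complex.sinh_zero w fun r hr => ?_
  exact (norm_cosh_le _).trans (Real.exp_le_exp.2 (abs_re_ofReal_mul_le hr w))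

theorem norm_cosh_sub_one_le (w : ℂ) : ‖cosh w - 1‖ ≤ ‖w‖ ^ 2 * Real.exp |w.re| := by
  have h := norm_le_mul_of_norm_deriv_le (f := fun v => cosh v - 1)
    (fun v => (Complex.hasDerivAt_cosh v).sub_const 1) (by simp) w
    (C := ‖w‖ * Real.exp |w.re|) fun r hr => (norm_sinh_le _).trans <| by
      gcongr ?_ * Real.exp ?_
      exacts [norm_ofReal_mul_le hr w, abs_re_ofReal_mul_le hr w]
  linarith

theorem norm_sinh_sub_self_le (w : ℂ) : ‖sinh w - w‖ ≤ ‖w‖ ^ 3 * Real.exp |w.re| := by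
  have h := norm_le_mul_of_norm_deriv_le (f := fun v => sinh v - v)
    (fun v => (Complex.hasDerivAt_sinh v).sub (hasDerivAt_id v)) (by simp) w
    (C := ‖w‖ ^ 2 * Real.exp |w.re|) fun r hr => (norm_cosh_sub_one_le _).trans <| by
      gcongr ?_ ^ 2 * Real.exp ?_
      exacts [norm_ofReal_mul_le hr w, abs_re_ofReal_mul_le hr w]
  linarith

theorem norm_sinh_mul_sinh_sub_mul_le (u v : ℂ) :
    ‖sinh u * sinh v - u * v‖ ≤
      ‖u‖ * ‖v‖ * (‖u‖ ^ 2 + ‖v‖ ^ 2) * Real.exp (|u.re| + |v.re|) := by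
  have hone : 1 ≤ Real.exp |u.re| := Real.one_le_exp (abs_nonneg _)
  calc ‖sinh u * sinh v - u * v‖ = ‖(sinh u - u) * sinh v + u * (sinh v - v)‖ := by ring_nf
    _ ≤ ‖sinh u - u‖ * ‖sinh v‖ + ‖u‖ * ‖sinh v - v‖ := by
        simpa only [norm_mul] using norm_add_le ((sinh u - u) * sinh v) (u * (sinh v - v))
    _ ≤ ‖u‖ ^ 3 * Real.exp |u.re| * (‖v‖ * Real.exp |v.re|) +
          ‖u‖ * (‖v‖ ^ 3 * (Real.exp |u.re| * Real.exp |v.re|)) := by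
        gcongr
        · exact norm_sinh_sub_self_le u
        · exact norm_sinh_le v
        · exact (norm_sinh_sub_self_le v).trans (by gcongr; nlinarith [Real.exp_pos |v.re|])
    _ = _ := by rw [Real.exp_add]; ring

theorem norm_cos_le (w : ℂ) : ‖cos w‖ ≤ Real.exp |w.im| := by
  simpa [Complex.cosh_mul_I] using norm_cosh_le (w * I)

theorem norm_cos_sub_one_le (w : ℂ) : ‖cos w - 1‖ ≤ ‖w‖ ^ 2 * Real.exp |w.im| := by
  simpa [Complex.cosh_mul_I] using norm_cosh_sub_one_le (w * I)

theorem norm_sin_le (w : ℂ) : ‖sin w‖ ≤ ‖w‖ * Real.exp |w.im| := by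
  simpa [Complex.sinh_mul_I] using norm_sinh_le (w * I)

theorem sinh_ofReal_mul_ne_zero {a t : ℝ} (ha : 0 < a) (ht : 0 < t) :
    sinh ((a : ℂ) * t) ≠ 0 := by
  rw [← ofReal_mul, ← ofReal_sinh, ofReal_ne_zero]
  exact (Real.sinh_pos_iff.2 (mul_pos ha ht)).ne'

theorem norm_sinh_ofReal_mul {a t : ℝ} (ha : 0 < a) (ht : 0 < t) :
    ‖sinh ((a : ℂ) * t)‖ = Real.sinh (a * t) := by
  rw [← ofReal_mul, ← ofReal_sinh, norm_real,
    Real.norm_of_nonneg (Real.sinh_pos_iff.2 (mul_pos ha ht)).le]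

theorem div_sinh_mul_le {a t : ℝ} (ha : 0 < a) (ht : 0 < t) :
    t / Real.sinh (a * t) ≤ (1 / a + 2 * t) * Real.exp (-(a * t)) := by
  have hx : 0 < a * t := mul_pos ha ht
  rw [div_le_iff₀ (Real.sinh_pos_iff.2 hx), Real.sinh_eq]
  have hinv : Real.exp (-(a * t)) * Real.exp (a * t) = 1 := by rw [← Real.exp_add]; simp
  have hsq : (1 + 2 * (a * t)) * Real.exp (-(a * t)) ^ 2 ≤ 1 := by
    rw [← Real.exp_nat_mul, ← le_div_iff₀ (Real.exp_pos _), one_div, ← Real.exp_neg]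
    have := Real.add_one_le_exp (-((2 : ℕ) * -(a * t)))
    push_cast at this ⊢
    linarith
  calc t = (1 + 2 * (a * t) - 1) / (2 * a) := by field_simp; ring
    _ ≤ (1 + 2 * (a * t) - (1 + 2 * (a * t)) * Real.exp (-(a * t)) ^ 2) / (2 * a) := by gcongr
    _ = (1 + 2 * (a * t)) / a * Real.exp (-(a * t)) *
          ((Real.exp (a * t) - Real.exp (-(a * t))) / 2) := by
        linear_combination (-(1 + 2 * (a * t)) / (2 * a)) * hinv
    _ = _ := by field_simp

theorem exists_div_sinh_mul_le_exp {a κ : ℝ} (ha : 0 < a) (hκ : κ < a) :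
    ∃ C > 0, ∀ t > 0, t / Real.sinh (a * t) ≤ C * Real.exp (-(κ * t)) := by
  have hgap : 0 < a - κ := sub_pos.2 hκ
  refine ⟨1 / a + 2 / (a - κ), by positivity, fun t ht => (div_sinh_mul_le ha ht).trans ?_⟩
  have hlin : 1 / a + 2 * t ≤ (1 / a + 2 / (a - κ)) * Real.exp ((a - κ) * t) := by
    have hexp := Real.add_one_le_exp ((a - κ) * t)
    have ht' : 2 * t = 2 / (a - κ) * ((a - κ) * t) := by field_simp
    have : 0 < (a - κ) * t := mul_pos hgap ht
    rw [ht', add_mul]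
    gcongr
    · exact le_mul_of_one_le_right (by positivity) (by linarith)
    · linarith
  calc (1 / a + 2 * t) * Real.exp (-(a * t))
      ≤ (1 / a + 2 / (a - κ)) * Real.exp ((a - κ) * t) * Real.exp (-(a * t)) := by gcongr
    _ = (1 / a + 2 / (a - κ)) * Real.exp (-(κ * t)) := by
        rw [mul_assoc, ← Real.exp_add]
        ring_nf

theorem exists_sq_div_sinh_mul_sinh_le_exp {a b κ : ℝ} (ha : 0 < a) (hb : 0 < b)
    (hκ : κ < a + b) :
    ∃ C > 0, ∀ t > 0,
      t ^ 2 / (Real.sinh (a * t) * Real.sinh (b * t)) ≤ C * Real.exp (-(κ * t)) := by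
  obtain ⟨C, hC, hCle⟩ := exists_div_sinh_mul_le_exp ha (κ := (κ + a - b) / 2) (by linarith)
  obtain ⟨D, hD, hDle⟩ := exists_div_sinh_mul_le_exp hb (κ := (κ + b - a) / 2) (by linarith)
  refine ⟨C * D, mul_pos hC hD, fun t ht => ?_⟩
  have : 0 < Real.sinh (b * t) := Real.sinh_pos_iff.2 (mul_pos hb ht)
  calc t ^ 2 / (Real.sinh (a * t) * Real.sinh (b * t))
      = t / Real.sinh (a * t) * (t / Real.sinh (b * t)) := by rw [sq, mul_div_mul_comm]
    _ ≤ C * Real.exp (-((κ + a - b) / 2 * t)) * (D * Real.exp (-((κ + b - a) / 2 * t))) := by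
        gcongr
        exacts [hCle t ht, hDle t ht]
    _ = C * D * Real.exp (-(κ * t)) := by
        rw [mul_mul_mul_comm, ← Real.exp_add]
        ring_nf

end HyperbolicEstimates

section GhypDeriv

theorem mul_mul_sq_le_sinh_mul_sinh {p m t : ℝ} (hp : 0 < p) (hm : 0 < m) (ht : 0 < t) :
    p * m * t ^ 2 ≤ Real.sinh (p * t) * Real.sinh (m * t) := by
  calc p * m * t ^ 2 = p * t * (m * t) := by ring
    _ ≤ Real.sinh (p * t) * Real.sinh (m * t) := by
        gcongr
        exacts [Real.self_le_sinh_iff.2 (by positivity), Real.self_le_sinh_iff.2 (by positivity)]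

theorem sinh_mul_sinh_sub_mul_mul_sq_le {p m t : ℝ} (hp : 0 < p) (hm : 0 < m) (ht : 0 < t)
    (ht1 : t ≤ 1) :
    Real.sinh (p * t) * Real.sinh (m * t) - p * m * t ^ 2 ≤
      p * m * t ^ 2 * ((p ^ 2 + m ^ 2) * Real.exp (p + m) * t ^ 2) := by
  have h := norm_sinh_mul_sinh_sub_mul_le ((p * t : ℝ) : ℂ) ((m * t : ℝ) : ℂ)
  rw [← ofReal_sinh, ← ofReal_sinh, ← ofReal_mul, ← ofReal_mul, ← ofReal_sub] at h
  simp only [norm_real, Real.norm_eq_abs, ofReal_re, sq_abs] at h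
  rw [abs_of_pos (mul_pos hp ht), abs_of_pos (mul_pos hm ht)] at h
  calc Real.sinh (p * t) * Real.sinh (m * t) - p * m * t ^ 2
      = Real.sinh (p * t) * Real.sinh (m * t) - p * t * (m * t) := by ring
    _ ≤ p * t * (m * t) * ((p * t) ^ 2 + (m * t) ^ 2) * Real.exp (p * t + m * t) :=
        (le_abs_self _).trans h
    _ ≤ p * t * (m * t) * ((p * t) ^ 2 + (m * t) ^ 2) * Real.exp (p * 1 + m * 1) := by gcongr
    _ = _ := by ring_nf

theorem exists_abs_inv_sinh_mul_sinh_sub_inv_le {p m : ℝ} (hp : 0 < p) (hm : 0 < m) :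
    ∃ C, ∀ t > 0, |1 / (Real.sinh (p * t) * Real.sinh (m * t)) - 1 / (p * m * t ^ 2)| ≤
      C * (1 + t ^ 2)⁻¹ := by
  set E := (p ^ 2 + m ^ 2) * Real.exp (p + m)
  have hE : 0 ≤ E := by positivity
  refine ⟨2 * (E + 1) / (p * m), fun t ht => ?_⟩
  set S := Real.sinh (p * t) * Real.sinh (m * t)
  have hlow : p * m * t ^ 2 ≤ S := mul_mul_sq_le_sinh_mul_sinh hp hm ht
  have hpos : 0 < p * m * t ^ 2 := by positivity
  have hS : 0 < S := hpos.trans_le hlow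
  have hsub : |1 / S - 1 / (p * m * t ^ 2)| = (S - p * m * t ^ 2) / (S * (p * m * t ^ 2)) := by
    rw [abs_sub_comm, div_sub_div _ _ hpos.ne' hS.ne', one_mul, mul_one,
      abs_of_nonneg (div_nonneg (sub_nonneg.2 hlow) (by positivity)), mul_comm S]
  suffices hmin : (S - p * m * t ^ 2) / S ≤ (E + 1) * (2 * t ^ 2 / (1 + t ^ 2)) by
    calc |1 / S - 1 / (p * m * t ^ 2)| = (S - p * m * t ^ 2) / S / (p * m * t ^ 2) := by
          rw [hsub, div_div]
      _ ≤ (E + 1) * (2 * t ^ 2 / (1 + t ^ 2)) / (p * m * t ^ 2) := by gcongr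
      _ = 2 * (E + 1) / (p * m) * (1 + t ^ 2)⁻¹ := by field_simp
  rcases le_total t 1 with ht1 | ht1
  · calc (S - p * m * t ^ 2) / S ≤ p * m * t ^ 2 * (E * t ^ 2) / (p * m * t ^ 2) := by
          gcongr
          exact sinh_mul_sinh_sub_mul_mul_sq_le hp hm ht ht1
      _ = E * t ^ 2 := by field_simp
      _ ≤ (E + 1) * (2 * t ^ 2 / (1 + t ^ 2)) := by
          gcongr
          · linarith
          · rw [le_div_iff₀ (by positivity)]
            nlinarith [sq_nonneg t, pow_le_one₀ ht.le ht1 (n := 2)]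
  · calc (S - p * m * t ^ 2) / S ≤ 1 * 1 := by
          rw [one_mul, div_le_one hS]
          linarith
      _ ≤ (E + 1) * (2 * t ^ 2 / (1 + t ^ 2)) := by
          gcongr
          · linarith
          · rw [le_div_iff₀ (by positivity)]
            nlinarith

/-- The integrand in the definition of `ghyp`. -/
noncomputable def ghypIntegrand (p m : ℝ) (z : ℂ) (t : ℝ) : ℂ :=
  1 / (t : ℂ) * (sin (2 * t * z) / (2 * sinh (p * t) * sinh (m * t)) - z / (p * m * t))

/-- The derivative of `ghypIntegrand` with respect to `z`. -/
noncomputable def ghypDerivIntegrand (p m : ℝ) (z : ℂ) (t : ℝ) : ℂ :=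
  cos (2 * t * z) / (sinh (p * t) * sinh (m * t)) - 1 / (p * m * t ^ 2)

theorem abs_im_two_mul_ofReal_mul {t : ℝ} (ht : 0 < t) (z : ℂ) :
    |(2 * (t : ℂ) * z).im| = 2 * t * |z.im| := by
  rw [show 2 * (t : ℂ) = ((2 * t : ℝ) : ℂ) by push_cast; rfl, im_ofReal_mul, abs_mul,
    abs_of_pos (by positivity)]

theorem norm_two_mul_ofReal_mul {t : ℝ} (ht : 0 < t) (z : ℂ) :
    ‖2 * (t : ℂ) * z‖ = 2 * t * ‖z‖ := by
  rw [norm_mul, norm_mul, Complex.norm_ofNat, norm_real, Real.norm_of_nonneg ht.le]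

variable {p m : ℝ}

theorem continuousOn_ghypIntegrand (hp : 0 < p) (hm : 0 < m) (z : ℂ) :
    ContinuousOn (ghypIntegrand p m z) (Set.Ioi 0) := by
  unfold ghypIntegrand
  refine .mul (.div (by fun_prop) (by fun_prop) ?_)
    (.sub (.div (by fun_prop) (by fun_prop) ?_) (.div (by fun_prop) (by fun_prop) ?_))
  all_goals
    intro t (ht : 0 < t)
    simp [sinh_ofReal_mul_ne_zero, hp, hm, ht, ht.ne', hp.ne', hm.ne']

theorem continuousOn_ghypDerivIntegrand (hp : 0 < p) (hm : 0 < m) (z : ℂ) :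
    ContinuousOn (ghypDerivIntegrand p m z) (Set.Ioi 0) := by
  unfold ghypDerivIntegrand
  refine .sub (.div (by fun_prop) (by fun_prop) ?_) (.div (by fun_prop) (by fun_prop) ?_)
  all_goals
    intro t (ht : 0 < t)
    simp [sinh_ofReal_mul_ne_zero, hp, hm, ht, ht.ne', hp.ne', hm.ne']

theorem hasDerivAt_ghypIntegrand {t : ℝ} (ht : 0 < t) (z : ℂ) :
    HasDerivAt (fun w => ghypIntegrand p m w t) (ghypDerivIntegrand p m z t) z := by
  have ht' : (t : ℂ) ≠ 0 := ofReal_ne_zero.2 ht.ne'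
  have hsin : HasDerivAt (fun w : ℂ => sin (2 * t * w)) (cos (2 * t * z) * (2 * t * 1)) z :=
    ((hasDerivAt_id z).const_mul (2 * (t : ℂ))).csin
  refine (((hsin.div_const (2 * sinh (p * t) * sinh (m * t))).sub
    ((hasDerivAt_id z).div_const ((p : ℂ) * m * t))).const_mul (1 / (t : ℂ))).congr_deriv ?_
  simp only [ghypDerivIntegrand, div_eq_mul_inv, mul_inv]
  field_simp

theorem exists_norm_cos_sub_one_div_sinh_mul_sinh_le (hp : 0 < p) (hm : 0 < m) {η : ℝ}
    (hη : η < (p + m) / 2) (R : ℝ) :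
    ∃ C, ∃ k > 0, ∀ t : ℝ, 0 < t → ∀ z : ℂ, |z.im| ≤ η → ‖z‖ ≤ R →
      ‖(cos (2 * t * z) - 1) / (sinh (p * t) * sinh (m * t))‖ ≤ C * Real.exp (-k * t) := by
  obtain ⟨κ, hηκ, hκ⟩ := exists_between (show 2 * η < p + m by linarith)
  obtain ⟨C, -, hC⟩ := exists_sq_div_sinh_mul_sinh_le_exp hp hm hκ
  refine ⟨4 * R ^ 2 * C, κ - 2 * η, sub_pos.2 hηκ, fun t ht z hzη hzR => ?_⟩
  have hcos : ‖cos (2 * t * z) - 1‖ ≤ (2 * t * R) ^ 2 * Real.exp (2 * t * η) := by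
    refine (norm_cos_sub_one_le _).trans ?_
    rw [abs_im_two_mul_ofReal_mul ht, norm_two_mul_ofReal_mul ht]
    gcongr
  have : 0 < Real.sinh (p * t) * Real.sinh (m * t) :=
    lt_of_lt_of_le (by positivity) (mul_mul_sq_le_sinh_mul_sinh hp hm ht)
  rw [norm_div, norm_mul, norm_sinh_ofReal_mul hp ht, norm_sinh_ofReal_mul hm ht]
  calc ‖cos (2 * t * z) - 1‖ / (Real.sinh (p * t) * Real.sinh (m * t))
      ≤ (2 * t * R) ^ 2 * Real.exp (2 * t * η) / (Real.sinh (p * t) * Real.sinh (m * t)) := by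
        gcongr
    _ = 4 * R ^ 2 * Real.exp (2 * t * η) *
          (t ^ 2 / (Real.sinh (p * t) * Real.sinh (m * t))) := by ring
    _ ≤ 4 * R ^ 2 * Real.exp (2 * t * η) * (C * Real.exp (-(κ * t))) := by
        gcongr
        exact hC t ht
    _ = 4 * R ^ 2 * C * Real.exp (-(κ - 2 * η) * t) := by
        rw [mul_mul_mul_comm, ← Real.exp_add]
        ring_nf

theorem exists_integrableOn_bound_ghypDerivIntegrand (hp : 0 < p) (hm : 0 < m) {η : ℝ}
    (hη : η < (p + m) / 2) (R : ℝ) :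
    ∃ B : ℝ → ℝ, IntegrableOn B (Set.Ioi 0) ∧ ∀ t > 0, ∀ z : ℂ, |z.im| ≤ η → ‖z‖ ≤ R →
      ‖ghypDerivIntegrand p m z t‖ ≤ B t := by
  obtain ⟨C, k, hk, hC⟩ := exists_norm_cos_sub_one_div_sinh_mul_sinh_le hp hm hη R
  obtain ⟨D, hD⟩ := exists_abs_inv_sinh_mul_sinh_sub_inv_le hp hm
  refine ⟨fun t => C * Real.exp (-k * t) + D * (1 + t ^ 2)⁻¹,
    .add ((exp_neg_integrableOn_Ioi 0 hk).const_mul _)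
      (integrable_inv_one_add_sq.const_mul D).integrableOn, fun t ht z hzη hzR => ?_⟩
  have hsplit : ghypDerivIntegrand p m z t =
      (cos (2 * t * z) - 1) / (sinh (p * t) * sinh (m * t)) +
        ((1 / (Real.sinh (p * t) * Real.sinh (m * t)) - 1 / (p * m * t ^ 2) : ℝ) : ℂ) := by
    simp only [ghypDerivIntegrand]
    push_cast
    ring
  rw [hsplit]
  refine (norm_add_le _ _).trans (add_le_add (hC t ht z hzη hzR) ?_)
  rw [norm_real]
  exact hD t ht

theorem integrableOn_ghypIntegrand (hp : 0 < p) (hm : 0 < m) {z : ℂ}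
    (hz : |z.im| < (p + m) / 2) : IntegrableOn (ghypIntegrand p m z) (Set.Ioi 0) := by
  obtain ⟨B, hB, hle⟩ := exists_integrableOn_bound_ghypDerivIntegrand hp hm hz ‖z‖
  refine (hB.mul_const ‖z‖).mono'
    ((continuousOn_ghypIntegrand hp hm z).aestronglyMeasurable measurableSet_Ioi) ?_
  filter_upwards [ae_restrict_mem measurableSet_Ioi] with t ht
  refine norm_le_mul_of_norm_deriv_le (hasDerivAt_ghypIntegrand ht) (by simp [ghypIntegrand]) z
    fun r hr => hle t ht _ ?_ (norm_ofReal_mul_le hr z)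
  rw [im_ofReal_mul, abs_mul, abs_of_nonneg hr.1]
  exact mul_le_of_le_one_left (abs_nonneg _) hr.2

theorem integrableOn_ghypDerivIntegrand (hp : 0 < p) (hm : 0 < m) {z : ℂ}
    (hz : |z.im| < (p + m) / 2) : IntegrableOn (ghypDerivIntegrand p m z) (Set.Ioi 0) := by
  obtain ⟨B, hB, hle⟩ := exists_integrableOn_bound_ghypDerivIntegrand hp hm hz ‖z‖
  refine hB.mono' ((continuousOn_ghypDerivIntegrand hp hm z).aestronglyMeasurable
    measurableSet_Ioi) ?_
  filter_upwards [ae_restrict_mem measurableSet_Ioi] with t ht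
  exact hle t ht z le_rfl le_rfl

theorem isOpen_abs_im_lt (η : ℝ) : IsOpen {z : ℂ | |z.im| < η} :=
  isOpen_lt (by fun_prop) continuous_const

theorem hasDerivAt_ghyp (hp : 0 < p) (hm : 0 < m) {z : ℂ} (hz : |z.im| < (p + m) / 2) :
    HasDerivAt (ghyp p m) (∫ t in Set.Ioi (0 : ℝ), ghypDerivIntegrand p m z t) z := by
  obtain ⟨η, hzη, hη⟩ := exists_between hz
  obtain ⟨B, hB, hle⟩ := exists_integrableOn_bound_ghypDerivIntegrand hp hm hη (‖z‖ + 1)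
  have hnhds : {w : ℂ | |w.im| < η} ∩ {w | ‖w‖ < ‖z‖ + 1} ∈ nhds z :=
    ((isOpen_abs_im_lt η).inter (isOpen_lt continuous_norm continuous_const)).mem_nhds
      ⟨hzη, lt_add_one ‖z‖⟩
  refine (hasDerivAt_integral_of_dominated_loc_of_deriv_le hnhds (.of_forall fun w =>
    (continuousOn_ghypIntegrand hp hm w).aestronglyMeasurable measurableSet_Ioi)
    (integrableOn_ghypIntegrand hp hm hz)
    ((continuousOn_ghypDerivIntegrand hp hm z).aestronglyMeasurable measurableSet_Ioi)
    ?_ hB ?_).2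
  all_goals filter_upwards [ae_restrict_mem measurableSet_Ioi] with t ht w hw
  · exact hle t ht w hw.1.le hw.2.le
  · exact hasDerivAt_ghypIntegrand ht w

end GhypDeriv

section TanhIntegral

theorem two_mul_cot_two_mul_sub_cot {v : ℂ} (hv : sin (2 * v) ≠ 0) :
    2 * cot (2 * v) - cot v = -tan v := by
  rw [sin_two_mul] at hv
  have hsin : sin v ≠ 0 := fun h => hv (by simp [h])
  have hcos : cos v ≠ 0 := fun h => hv (by simp [h])
  rw [cot, cot, tan, sin_two_mul, cos_two_mul']
  field_simp
  ring

theorem cotTerm_two_mul_odd (x : ℂ) (n : ℕ) :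
    cotTerm (2 * x) (2 * n + 1) = 1 / 2 * cotTerm x n := by
  have hsub : 2 * x - ((2 * n + 1 : ℕ) + 1) = 2 * (x - (n + 1)) := by push_cast; ring
  have hadd : 2 * x + ((2 * n + 1 : ℕ) + 1) = 2 * (x + (n + 1)) := by push_cast; ring
  rw [cotTerm, cotTerm, hsub, hadd]
  simp only [one_div, mul_inv]
  ring

-- `cotTerm _ (2 * n)` has its poles at the odd integers `±(2 * n + 1)`.
theorem tsum_cotTerm_two_mul_even {x : ℂ} (hx : 2 * x ∈ integerComplement) :
    ∑' n, cotTerm (2 * x) (2 * n) = -(Real.pi / 2) * tan (Real.pi * x) := by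
  have hx' : x ∈ integerComplement := by
    rintro ⟨n, rfl⟩
    exact hx ⟨2 * n, by push_cast; rfl⟩
  have hsum := summable_cotTerm hx
  have hsplit := tsum_even_add_odd (f := cotTerm (2 * x))
    (hsum.comp_injective (mul_right_injective₀ two_ne_zero))
    (hsum.comp_injective ((add_left_injective 1).comp (mul_right_injective₀ two_ne_zero)))
  simp only [cotTerm_two_mul_odd, tsum_mul_left] at hsplit
  have hdup := two_mul_cot_two_mul_sub_cot (v := Real.pi * x)
    (by simpa [mul_left_comm] using sin_pi_mul_ne_zero hx)
  rw [← cot_series_rep' hx, ← cot_series_rep' hx', mul_left_comm] at hsplit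
  rw [eq_sub_of_add_eq hsplit]
  linear_combination (Real.pi / 2 : ℂ) * hdup

theorem sq_add_sq_ne_zero_of_abs_im_lt {a : ℂ} {k : ℝ} (hk : |a.im| < k) :
    a ^ 2 + (k : ℂ) ^ 2 ≠ 0 := by
  have hfac : a ^ 2 + (k : ℂ) ^ 2 = (a - k * I) * (a + k * I) := by
    linear_combination (k : ℂ) ^ 2 * I_sq
  have hk' := abs_lt.1 hk
  rw [hfac]
  refine mul_ne_zero (fun h => ?_) fun h => ?_
  all_goals
    have := congrArg im h
    simp at this
    linarith

theorem two_mul_div_sq_add_sq_eq_cotTerm {M : ℝ} (hM : 0 < M) (a : ℂ) (n : ℕ)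
    (h : a ^ 2 + ((2 * n + 1) * M) ^ 2 ≠ 0) :
    2 * a / (a ^ 2 + ((2 * n + 1) * M) ^ 2) =
      I / M * cotTerm (2 * (a / (2 * M) * I)) (2 * n) := by
  have hM' : (M : ℂ) ≠ 0 := ofReal_ne_zero.2 hM.ne'
  have hfac : a ^ 2 + ((2 * n + 1) * M) ^ 2 =
      -(a * I - (2 * n + 1) * M) * (a * I + (2 * n + 1) * M) := by
    linear_combination a ^ 2 * I_sq
  rw [hfac] at h ⊢
  have hsub : 2 * (a / (2 * M) * I) - ((2 * n : ℕ) + 1) = (a * I - (2 * n + 1) * M) / M := by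
    push_cast; field_simp
  have hadd : 2 * (a / (2 * M) * I) + ((2 * n : ℕ) + 1) = (a * I + (2 * n + 1) * M) / M := by
    push_cast; field_simp
  have h₁ : a * I - (2 * n + 1) * M ≠ 0 := fun h' => h (by simp [h'])
  have h₂ : a * I + (2 * n + 1) * M ≠ 0 := fun h' => h (by simp [h'])
  rw [cotTerm, hsub, hadd]
  field_simp
  linear_combination (-2 * a) * I_sq

theorem mul_I_div_mem_integerComplement {M : ℝ} (hM : 0 < M) {a : ℂ} (ha : |a.im| < M)
    (ha0 : a ≠ 0) : 2 * (a / (2 * M) * I) ∈ integerComplement := by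
  rintro ⟨n, hn⟩
  have hM' : (M : ℂ) ≠ 0 := ofReal_ne_zero.2 hM.ne'
  have haI : (n : ℂ) * M = a * I := by rw [hn]; field_simp
  have him : (n : ℝ) * M = -a.im := by simpa using congrArg re haI
  have hn1 : |(n : ℝ)| < 1 := by
    have : |(n : ℝ)| * M < 1 * M := by
      rwa [← abs_of_pos hM, ← abs_mul, him, abs_neg, abs_of_pos hM, one_mul]
    exact lt_of_mul_lt_mul_right this hM.le
  have hn0 : n = 0 := Int.abs_lt_one_iff.1 (by exact_mod_cast hn1)
  simp [hn0, ha0] at haI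

theorem sin_mul_exp_neg_eq (a : ℂ) (k t : ℝ) :
    sin (a * t) * exp (-k * t) =
      I / 2 * (exp ((-(a * I) - k) * t) - exp ((a * I - k) * t)) := by
  rw [show (-(a * I) - k) * (t : ℂ) = -(a * t) * I + -k * t by ring,
    show (a * I - k) * (t : ℂ) = a * t * I + -k * t by ring, exp_add, exp_add, sin]
  ring

theorem re_neg_mul_I_sub_neg {a : ℂ} {k : ℝ} (hk : |a.im| < k) :
    (-(a * I) - k).re < 0 ∧ (a * I - k).re < 0 := by
  have := abs_lt.1 hk
  constructor <;> simp <;> linarith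

theorem integrableOn_sin_mul_exp_neg_Ioi {a : ℂ} {k : ℝ} (hk : |a.im| < k) :
    IntegrableOn (fun t : ℝ => sin (a * t) * exp (-k * t)) (Set.Ioi 0) := by
  obtain ⟨hre₁, hre₂⟩ := re_neg_mul_I_sub_neg hk
  simp only [sin_mul_exp_neg_eq]
  exact ((integrableOn_exp_mul_complex_Ioi hre₁ 0).sub
    (integrableOn_exp_mul_complex_Ioi hre₂ 0)).const_mul _

theorem integral_sin_mul_exp_neg_Ioi {a : ℂ} {k : ℝ} (hk : |a.im| < k) :
    ∫ t in Set.Ioi (0 : ℝ), sin (a * t) * exp (-k * t) = a / (a ^ 2 + k ^ 2) := by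
  obtain ⟨hre₁, hre₂⟩ := re_neg_mul_I_sub_neg hk
  have h₁ : -(a * I) - k ≠ 0 := fun h => by simp [h] at hre₁
  have h₂ : a * I - k ≠ 0 := fun h => by simp [h] at hre₂
  have hfac : a ^ 2 + (k : ℂ) ^ 2 = (-(a * I) - k) * (a * I - k) := by
    linear_combination a ^ 2 * I_sq
  simp only [sin_mul_exp_neg_eq]
  rw [integral_const_mul, integral_sub (integrableOn_exp_mul_complex_Ioi hre₁ 0)
    (integrableOn_exp_mul_complex_Ioi hre₂ 0), integral_exp_mul_complex_Ioi hre₁,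
    integral_exp_mul_complex_Ioi hre₂, hfac, ofReal_zero, mul_zero, mul_zero, exp_zero,
    div_sub_div _ _ h₁ h₂, ← mul_div_assoc]
  congr 1
  linear_combination -a * I_sq

theorem integral_norm_sin_mul_exp_neg_le {a : ℂ} {k : ℝ} (hk : |a.im| < k) :
    ∫ t in Set.Ioi (0 : ℝ), ‖sin (a * t) * exp (-k * t)‖ ≤ ‖a‖ * (1 / (k - |a.im|) ^ 2) := by
  have hgap : 0 < k - |a.im| := sub_pos.2 hk
  have hGamma := Real.integral_rpow_mul_exp_neg_mul_Ioi two_pos hgap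
  have hint := integrableOn_rpow_mul_exp_neg_mul_rpow (s := 1) (p := 1) (by norm_num) one_pos hgap
  norm_num at hGamma
  simp only [Real.rpow_one, neg_mul] at hint
  rw [one_div, ← hGamma, ← integral_const_mul]
  refine setIntegral_mono_on (integrableOn_sin_mul_exp_neg_Ioi hk).norm
    (hint.const_mul ‖a‖) measurableSet_Ioi fun t (ht : 0 < t) => ?_
  have hsin := norm_sin_le (a * t)
  rw [im_mul_ofReal, abs_mul, norm_mul, norm_real, Real.norm_eq_abs, abs_of_pos ht] at hsin
  have hexp : ‖exp (-k * t)‖ = Real.exp (-k * t) := by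
    rw [← ofReal_neg, ← ofReal_mul, norm_exp_ofReal]
  calc ‖sin (a * t) * exp (-k * t)‖ ≤ ‖a‖ * t * Real.exp (|a.im| * t) * Real.exp (-k * t) := by
        rw [norm_mul, hexp]
        gcongr
    _ = ‖a‖ * (t * Real.exp (-((k - |a.im|) * t))) := by
        rw [mul_assoc, ← Real.exp_add]
        ring_nf

theorem mul_sub_abs_im_le_odd_mul_sub {M : ℝ} {a : ℂ} (ha : |a.im| < M) (n : ℕ) :
    (n + 1) * (M - |a.im|) ≤ (2 * n + 1) * M - |a.im| := by
  have hM : 0 < M := (abs_nonneg _).trans_lt ha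
  have : 0 ≤ (n : ℝ) * (M + |a.im|) := by positivity
  linarith

theorem abs_im_lt_odd_mul {M : ℝ} {a : ℂ} (ha : |a.im| < M) (n : ℕ) :
    |a.im| < (2 * n + 1) * M := by
  have : 0 < ((n : ℝ) + 1) * (M - |a.im|) := mul_pos n.cast_add_one_pos (sub_pos.2 ha)
  linarith [mul_sub_abs_im_le_odd_mul_sub ha n]

theorem summable_integral_norm_sin_mul_exp_neg_odd {M : ℝ} {a : ℂ} (ha : |a.im| < M) :
    Summable fun n : ℕ => ∫ t in Set.Ioi (0 : ℝ),
      ‖sin (a * t) * exp (-((2 * n + 1) * M : ℝ) * t)‖ := by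
  have hgap : 0 < M - |a.im| := sub_pos.2 ha
  have hmaj : Summable fun n : ℕ => ‖a‖ / (M - |a.im|) ^ 2 * (1 / ((n : ℝ) + 1) ^ 2) := by
    refine .mul_left _ ?_
    simpa using (summable_nat_add_iff 1).2 (Real.summable_one_div_nat_pow.2 one_lt_two)
  refine hmaj.of_nonneg_of_le (fun n => integral_nonneg fun t => norm_nonneg _) fun n => ?_
  calc ∫ t in Set.Ioi (0 : ℝ), ‖sin (a * t) * exp (-((2 * n + 1) * M : ℝ) * t)‖
      ≤ ‖a‖ * (1 / ((2 * n + 1) * M - |a.im|) ^ 2) :=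
        integral_norm_sin_mul_exp_neg_le (abs_im_lt_odd_mul ha n)
    _ ≤ ‖a‖ * (1 / ((n + 1) * (M - |a.im|)) ^ 2) := by
        gcongr
        exact mul_sub_abs_im_le_odd_mul_sub ha n
    _ = _ := by field_simp

theorem hasSum_exp_neg_odd_mul {x : ℝ} (hx : 0 < x) :
    HasSum (fun n : ℕ => 2 * exp (-(2 * n + 1) * x)) (1 / sinh x) := by
  have hlt : ‖exp (-2 * (x : ℂ))‖ < 1 := by
    rw [Complex.norm_exp, Real.exp_lt_one_iff]
    simpa using hx
  have hsinh : sinh (x : ℂ) ≠ 0 := by simpa using sinh_ofReal_mul_ne_zero one_pos hx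
  have hden : 1 - exp (-2 * (x : ℂ)) = 2 * exp (-x) * sinh x := by
    have h1 : exp (-(x : ℂ)) * exp x = 1 := by rw [← exp_add]; simp
    have h2 : exp (-2 * (x : ℂ)) = exp (-x) * exp (-x) := by rw [← exp_add]; ring_nf
    rw [sinh, h2]
    linear_combination -h1
  have hgeom := (hasSum_geometric_of_norm_lt_one hlt).mul_left (2 * exp (-(x : ℂ)))
  have hvalue : 2 * exp (-(x : ℂ)) * (1 - exp (-2 * (x : ℂ)))⁻¹ = 1 / sinh x := by
    rw [hden]
    have := exp_ne_zero (-(x : ℂ))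
    field_simp
  rw [hvalue] at hgeom
  refine hgeom.congr_fun fun n => ?_
  rw [← Complex.exp_nat_mul, mul_assoc, ← exp_add]
  ring_nf

theorem integral_sin_div_sinh_eq_tsum {M : ℝ} {a : ℂ} (ha : |a.im| < M) :
    ∫ t in Set.Ioi (0 : ℝ), sin (a * t) / sinh (M * t) =
      ∑' n : ℕ, 2 * a / (a ^ 2 + ((2 * n + 1) * M) ^ 2) := by
  have hM : 0 < M := (abs_nonneg _).trans_lt ha
  have hseries := hasSum_integral_of_summable_integral_norm
    (fun n => integrableOn_sin_mul_exp_neg_Ioi (abs_im_lt_odd_mul ha n))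
    (summable_integral_norm_sin_mul_exp_neg_odd ha)
  have hpointwise : ∀ t ∈ Set.Ioi (0 : ℝ), sin (a * t) / sinh (M * t) =
      2 * ∑' n : ℕ, sin (a * t) * exp (-((2 * n + 1) * M : ℝ) * t) := by
    intro t ht
    have h := ((hasSum_exp_neg_odd_mul (mul_pos hM ht)).mul_left (sin (a * t))).tsum_eq
    push_cast at h ⊢
    rw [← mul_one_div, ← h, ← tsum_mul_left]
    refine tsum_congr fun n => ?_
    ring_nf
  rw [setIntegral_congr_fun measurableSet_Ioi hpointwise, integral_const_mul, ← hseries.tsum_eq,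
    ← tsum_mul_left]
  refine tsum_congr fun n => ?_
  rw [integral_sin_mul_exp_neg_Ioi (abs_im_lt_odd_mul ha n)]
  push_cast
  ring

theorem integral_sin_div_sinh {M : ℝ} {a : ℂ} (ha : |a.im| < M) :
    ∫ t in Set.Ioi (0 : ℝ), sin (a * t) / sinh (M * t) =
      Real.pi / (2 * M) * tanh (Real.pi * a / (2 * M)) := by
  rcases eq_or_ne a 0 with rfl | ha0
  · simp
  have hM : 0 < M := (abs_nonneg _).trans_lt ha
  have hne (n : ℕ) : a ^ 2 + ((2 * n + 1) * M) ^ 2 ≠ 0 := by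
    exact_mod_cast sq_add_sq_ne_zero_of_abs_im_lt (abs_im_lt_odd_mul ha n)
  rw [integral_sin_div_sinh_eq_tsum ha,
    tsum_congr fun n => two_mul_div_sq_add_sq_eq_cotTerm hM a n (hne n), tsum_mul_left,
    tsum_cotTerm_two_mul_even (mul_I_div_mem_integerComplement hM ha ha0),
    show Real.pi * (a / (2 * M) * I) = Real.pi * a / (2 * M) * I by ring, tan_mul_I]
  linear_combination (-(Real.pi / (2 * M)) * tanh (Real.pi * a / (2 * M))) * I_sq

end TanhIntegral

section DifferenceEquation

/-- The logarithm of the quotient `G(z - ib/2) / G(z + ib/2)` of hyperbolic gamma functions. -/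
noncomputable def logGammaRatio (p m : ℝ) (b z : ℂ) : ℂ :=
  I * (ghyp p m (z - I * b / 2) - ghyp p m (z + I * b / 2))

/-- The quotient `G(z - ib/2) / G(z + ib/2)` of hyperbolic gamma functions, the building block of
the integrand of `J2`. -/
noncomputable def gammaRatio (p m : ℝ) (b z : ℂ) : ℂ :=
  Ghyp p m (z - I * b / 2) / Ghyp p m (z + I * b / 2)

variable {p m : ℝ}

theorem gammaRatio_eq_exp_logGammaRatio (b z : ℂ) :
    gammaRatio p m b z = exp (logGammaRatio p m b z) := by
  rw [gammaRatio, Ghyp, Ghyp, logGammaRatio, mul_sub, exp_sub]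

theorem abs_im_sub_I_mul_lt {M : ℝ} {b z : ℂ} (hb : 0 ≤ b.re) (hz : |z.im| < (M - b.re) / 2) :
    |(z - I * b / 2).im| < M / 2 := by
  have him : (z - I * b / 2).im = z.im - b.re / 2 := by simp
  rw [him, abs_lt]
  rw [abs_lt] at hz
  constructor <;> linarith

theorem abs_im_add_I_mul_lt {M : ℝ} {b z : ℂ} (hb : 0 ≤ b.re) (hz : |z.im| < (M - b.re) / 2) :
    |(z + I * b / 2).im| < M / 2 := by
  have him : (z + I * b / 2).im = z.im + b.re / 2 := by simp
  rw [him, abs_lt]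
  rw [abs_lt] at hz
  constructor <;> linarith

theorem ghypDerivIntegrand_sub_ghypDerivIntegrand (b z : ℂ) (t : ℝ) :
    ghypDerivIntegrand p m (z - I * b / 2) t - ghypDerivIntegrand p m (z + I * b / 2) t =
      2 * I * (sin (2 * z * t) * sinh (b * t) / (sinh (p * t) * sinh (m * t))) := by
  have hcos : cos (2 * t * (z - I * b / 2)) - cos (2 * t * (z + I * b / 2)) =
      2 * I * (sin (2 * z * t) * sinh (b * t)) := by
    rw [show 2 * t * (z - I * b / 2) = 2 * z * t - b * t * I by ring,
      show 2 * t * (z + I * b / 2) = 2 * z * t + b * t * I by ring, cos_sub, cos_add, sin_mul_I]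
    ring
  rw [ghypDerivIntegrand, ghypDerivIntegrand, sub_sub_sub_cancel_right, ← sub_div, hcos]
  ring

theorem hasDerivAt_logGammaRatio (hp : 0 < p) (hm : 0 < m) {b z : ℂ} (hb : 0 ≤ b.re)
    (hz : |z.im| < (p + m - b.re) / 2) :
    HasDerivAt (logGammaRatio p m b) (-2 * ∫ t in Set.Ioi (0 : ℝ),
      sin (2 * z * t) * sinh (b * t) / (sinh (p * t) * sinh (m * t))) z := by
  have hz₁ := abs_im_sub_I_mul_lt hb hz
  have hz₂ := abs_im_add_I_mul_lt hb hz
  refine ((((hasDerivAt_ghyp hp hm hz₁).comp_sub_const z _).sub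
    ((hasDerivAt_ghyp hp hm hz₂).comp_add_const z _)).const_mul I).congr_deriv ?_
  rw [← integral_sub (integrableOn_ghypDerivIntegrand hp hm hz₁)
    (integrableOn_ghypDerivIntegrand hp hm hz₂)]
  simp only [ghypDerivIntegrand_sub_ghypDerivIntegrand]
  rw [integral_const_mul]
  linear_combination 2 * (∫ t in Set.Ioi (0 : ℝ),
    sin (2 * z * t) * sinh (b * t) / (sinh (p * t) * sinh (m * t))) * I_sq

theorem re_cosh (w : ℂ) : (cosh w).re = Real.cosh w.re * Real.cos w.im := by
  conv_lhs => rw [← re_add_im w, cosh_add, cosh_mul_I, sinh_mul_I]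
  rw [← ofReal_cosh, ← ofReal_sinh, ← ofReal_cos, ← ofReal_sin]
  simp only [add_re, mul_re, ofReal_re, ofReal_im, I_re, I_im]
  ring

theorem re_cosh_pos {w : ℂ} (hw : |w.im| < Real.pi / 2) : 0 < (cosh w).re := by
  rw [re_cosh]
  exact mul_pos (Real.cosh_pos _) (Real.cos_pos_of_mem_Ioo (abs_lt.1 hw))

theorem pi_mul_div_ofReal (z : ℂ) (a : ℝ) : Real.pi * z / a = ((Real.pi / a : ℝ) : ℂ) * z := by
  push_cast
  ring

theorem abs_im_pi_mul_div {a : ℝ} (ha : 0 < a) (z : ℂ) :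
    |(Real.pi * z / a : ℂ).im| = Real.pi / a * |z.im| := by
  rw [pi_mul_div_ofReal, im_ofReal_mul, abs_mul, abs_of_pos (div_pos Real.pi_pos ha)]

theorem abs_im_pi_mul_div_lt {a : ℝ} (ha : 0 < a) {z : ℂ} (hz : |z.im| < a / 2) :
    |(Real.pi * z / a : ℂ).im| < Real.pi / 2 := by
  rw [abs_im_pi_mul_div ha]
  calc Real.pi / a * |z.im| < Real.pi / a * (a / 2) := by gcongr
    _ = Real.pi / 2 := by field_simp

theorem convex_abs_im_lt (η : ℝ) : Convex ℝ {z : ℂ | |z.im| < η} := by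
  simp only [abs_lt]
  exact (convex_halfSpace_im_gt _).inter (convex_halfSpace_im_lt _)

theorem hasDerivAt_logGammaRatio_self (hp : 0 < p) (hm : 0 < m) {z : ℂ} (hz : |z.im| < p / 2) :
    HasDerivAt (logGammaRatio p m m) (-(Real.pi / p * tanh (Real.pi * z / p))) z := by
  refine (hasDerivAt_logGammaRatio hp hm (by simpa using hm.le)
    (by simpa using hz)).congr_deriv ?_
  have hcancel : ∀ t ∈ Set.Ioi (0 : ℝ),
      sin (2 * z * t) * sinh (m * t) / (sinh (p * t) * sinh (m * t)) =
        sin (2 * z * t) / sinh (p * t) :=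
    fun t ht => mul_div_mul_right _ _ (sinh_ofReal_mul_ne_zero hm ht)
  have him : |(2 * z).im| < p := by
    have := abs_im_two_mul_ofReal_mul one_pos z
    simp only [ofReal_one, mul_one] at this
    linarith
  rw [setIntegral_congr_fun measurableSet_Ioi hcancel, integral_sin_div_sinh him,
    show Real.pi * (2 * z) / (2 * p) = Real.pi * z / p by ring]
  ring

theorem logGammaRatio_self (hp : 0 < p) (hm : 0 < m) {z : ℂ} (hz : |z.im| < p / 2) :
    logGammaRatio p m m z = logGammaRatio p m m 0 - log (cosh (Real.pi * z / p)) := by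
  set f : ℂ → ℂ := fun w => logGammaRatio p m m w + log (cosh (Real.pi * w / p))
  have hderiv : ∀ w ∈ {w : ℂ | |w.im| < p / 2}, HasDerivAt f 0 w := by
    intro w hw
    have hlin : HasDerivAt (fun w : ℂ => Real.pi * w / p) (Real.pi * 1 / p) w :=
      ((hasDerivAt_id w).const_mul _).div_const _
    refine ((hasDerivAt_logGammaRatio_self hp hm hw).add
      (hlin.ccosh.clog (.inl (re_cosh_pos (abs_im_pi_mul_div_lt hp hw))))).congr_deriv ?_
    rw [tanh]
    ring
  have hconst := (isOpen_abs_im_lt (p / 2)).is_const_of_deriv_eq_zero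
    (convex_abs_im_lt _).isPreconnected
    (fun w hw => (hderiv w hw).differentiableAt.differentiableWithinAt)
    (fun w hw => (hderiv w hw).deriv) hz (show (0 : ℂ) ∈ _ by simpa using hp)
  simp only [f, mul_zero, zero_div, cosh_zero, log_one, add_zero] at hconst
  linear_combination hconst

theorem cosh_pi_mul_div_ne_zero {a : ℝ} (ha : 0 < a) {z : ℂ} (hz : |z.im| < a / 2) :
    cosh (Real.pi * z / a) ≠ 0 := fun h => by
  simpa [h] using re_cosh_pos (abs_im_pi_mul_div_lt ha hz)

theorem gammaRatio_self_mul_cosh (hp : 0 < p) (hm : 0 < m) {z : ℂ} (hz : |z.im| < p / 2) :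
    gammaRatio p m m z * cosh (Real.pi * z / p) = gammaRatio p m m 0 := by
  have hcosh := cosh_pi_mul_div_ne_zero hp hz
  rw [gammaRatio_eq_exp_logGammaRatio, gammaRatio_eq_exp_logGammaRatio, logGammaRatio_self hp hm hz,
    exp_sub, exp_log hcosh, div_mul_cancel₀ _ hcosh]

end DifferenceEquation

section GammaRatio

variable {p m : ℝ}

theorem differentiableOn_gammaRatio (hp : 0 < p) (hm : 0 < m) {b : ℂ} (hb : 0 ≤ b.re) :
    DifferentiableOn ℂ (gammaRatio p m b) {z | |z.im| < (p + m - b.re) / 2} := fun _ hz =>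
  ((hasDerivAt_logGammaRatio hp hm hb hz).cexp.differentiableAt.congr_of_eventuallyEq
    (.of_forall (gammaRatio_eq_exp_logGammaRatio b))).differentiableWithinAt

theorem gammaRatio_mul_cosh (hp : 0 < p) (hm : 0 < m) {b u : ℂ} (hb : 0 ≤ b.re)
    (hu : |u.im| < (p - b.re) / 2) :
    gammaRatio p m b (u - I * m / 2) * cosh (Real.pi * (u - I * b / 2) / p) =
      gammaRatio p m b (u + I * m / 2) * cosh (Real.pi * (u + I * b / 2) / p) := by
  have hG : ∀ z, Ghyp p m z ≠ 0 := fun z => exp_ne_zero _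
  have hminus := gammaRatio_self_mul_cosh hp hm (abs_im_sub_I_mul_lt hb hu)
  have hplus := gammaRatio_self_mul_cosh hp hm (abs_im_add_I_mul_lt hb hu)
  rw [gammaRatio, div_mul_eq_mul_div, div_eq_iff (hG _)] at hminus hplus
  simp only [gammaRatio]
  rw [sub_right_comm u, add_sub_right_comm u, add_right_comm u, sub_add_eq_add_sub u,
    div_mul_eq_mul_div, div_mul_eq_mul_div, div_eq_div_iff (hG _) (hG _), hminus]
  linear_combination -Ghyp p m (u - I * b / 2 + I * m / 2) * hplus

end GammaRatio

section Decay

variable {p m : ℝ}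

theorem I_mul_ghypIntegrand_sub_ghypIntegrand (b z : ℂ) (t : ℝ) :
    I * (ghypIntegrand p m (z - I * b / 2) t - ghypIntegrand p m (z + I * b / 2) t) =
      1 / t * (cos (2 * t * z) * sinh (b * t) / (sinh (p * t) * sinh (m * t)) -
        b / (p * m * t)) := by
  have hsin : sin (2 * t * (z - I * b / 2)) - sin (2 * t * (z + I * b / 2)) =
      -2 * I * (cos (2 * t * z) * sinh (b * t)) := by
    rw [show 2 * t * (z - I * b / 2) = 2 * t * z - b * t * I by ring,
      show 2 * t * (z + I * b / 2) = 2 * t * z + b * t * I by ring, sin_sub, sin_add, sin_mul_I]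
    ring
  calc I * (ghypIntegrand p m (z - I * b / 2) t - ghypIntegrand p m (z + I * b / 2) t)
      = 1 / t * (I * (sin (2 * t * (z - I * b / 2)) - sin (2 * t * (z + I * b / 2))) /
          (2 * (sinh (p * t) * sinh (m * t))) + I * I * b / (p * m * t)) := by
        simp only [ghypIntegrand]
        ring
    _ = _ := by
        rw [hsin, I_mul_I, show I * (-2 * I * (cos (2 * t * z) * sinh (b * t))) =
          2 * (cos (2 * t * z) * sinh (b * t)) by
            linear_combination (-2 * (cos (2 * t * z) * sinh (b * t))) * I_mul_I,
          mul_div_mul_left _ _ two_ne_zero]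
        ring

/-- The kernel whose cosine transform compares `logGammaRatio p m b` with the elementary function
`logGammaRatio (p + m) (p + m) (p + m)`; the coefficient `b (p + m) / (p m)` is the one which makes
the singularities at `t = 0` cancel. -/
noncomputable def comparisonKernel (p m : ℝ) (b : ℂ) (t : ℝ) : ℂ :=
  1 / t * (sinh (b * t) / (sinh (p * t) * sinh (m * t)) -
    b * (p + m) / (p * m) / sinh ((p + m : ℝ) * t))

theorem integrableOn_I_mul_ghypIntegrand_sub (hp : 0 < p) (hm : 0 < m) {b z : ℂ} (hb : 0 ≤ b.re)
    (hz : |z.im| < (p + m - b.re) / 2) :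
    IntegrableOn (fun t => I * (ghypIntegrand p m (z - I * b / 2) t -
      ghypIntegrand p m (z + I * b / 2) t)) (Set.Ioi 0) :=
  ((integrableOn_ghypIntegrand hp hm (abs_im_sub_I_mul_lt hb hz)).sub
    (integrableOn_ghypIntegrand hp hm (abs_im_add_I_mul_lt hb hz))).const_mul I

theorem logGammaRatio_eq_setIntegral (hp : 0 < p) (hm : 0 < m) {b z : ℂ} (hb : 0 ≤ b.re)
    (hz : |z.im| < (p + m - b.re) / 2) :
    logGammaRatio p m b z = ∫ t in Set.Ioi (0 : ℝ), I * (ghypIntegrand p m (z - I * b / 2) t -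
      ghypIntegrand p m (z + I * b / 2) t) := by
  rw [integral_const_mul,
    integral_sub (integrableOn_ghypIntegrand hp hm (abs_im_sub_I_mul_lt hb hz))
      (integrableOn_ghypIntegrand hp hm (abs_im_add_I_mul_lt hb hz))]
  rfl

theorem logGammaRatio_sub_mul_logGammaRatio_self (hp : 0 < p) (hm : 0 < m) {b z : ℂ}
    (hb : 0 ≤ b.re) (hz : |z.im| < (p + m - b.re) / 2) :
    logGammaRatio p m b z -
        b * (p + m) / (p * m) * logGammaRatio (p + m) (p + m) (p + m : ℝ) z =
      ∫ t in Set.Ioi (0 : ℝ), cos (2 * t * z) * comparisonKernel p m b t := by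
  have hM : 0 < p + m := add_pos hp hm
  have hMre : 0 ≤ ((p + m : ℝ) : ℂ).re := by simpa using hM.le
  have hzM : |z.im| < (p + m + (p + m) - ((p + m : ℝ) : ℂ).re) / 2 := by
    rw [ofReal_re]
    linarith
  rw [logGammaRatio_eq_setIntegral hp hm hb hz, logGammaRatio_eq_setIntegral hM hM hMre hzM,
    ← integral_const_mul, ← integral_sub (integrableOn_I_mul_ghypIntegrand_sub hp hm hb hz)
      ((integrableOn_I_mul_ghypIntegrand_sub hM hM hMre hzM).const_mul _)]
  refine setIntegral_congr_fun measurableSet_Ioi fun t (ht : 0 < t) => ?_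
  have := sinh_ofReal_mul_ne_zero hM ht
  have hp' : (p : ℂ) ≠ 0 := ofReal_ne_zero.2 hp.ne'
  have hm' : (m : ℂ) ≠ 0 := ofReal_ne_zero.2 hm.ne'
  have hM' : ((p + m : ℝ) : ℂ) ≠ 0 := ofReal_ne_zero.2 hM.ne'
  have ht' : (t : ℂ) ≠ 0 := ofReal_ne_zero.2 ht.ne'
  simp only [I_mul_ghypIntegrand_sub_ghypIntegrand, comparisonKernel, ← ofReal_add]
  field_simp
  ring

theorem norm_sinh_mul_sinh_sub_le_of_pos {s t : ℝ} {b : ℂ} (hs : 0 < s) (ht : 0 < t)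
    (hb : 0 ≤ b.re) :
    ‖sinh (b * t) * sinh (s * t) - b * s * t ^ 2‖ ≤
      ‖b‖ * s * (‖b‖ ^ 2 + s ^ 2) * t ^ 4 * Real.exp ((b.re + s) * t) := by
  have h := norm_sinh_mul_sinh_sub_mul_le (b * t) (s * t)
  rw [re_mul_ofReal, ← ofReal_mul s t, ofReal_re, norm_mul, norm_real, norm_real,
    Real.norm_of_nonneg ht.le, Real.norm_of_nonneg (mul_pos hs ht).le, abs_of_pos (mul_pos hs ht),
    abs_of_nonneg (mul_nonneg hb ht.le), ← add_mul, ofReal_mul] at h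
  convert h using 1
  · congr 1
    ring
  · ring

theorem exists_cube_div_sinh_mul_sinh_mul_sinh_le_exp {a b c κ : ℝ} (ha : 0 < a) (hb : 0 < b)
    (hc : 0 < c) (hκ : κ < a + b + c) :
    ∃ C > 0, ∀ t > 0, t ^ 3 / (Real.sinh (a * t) * Real.sinh (b * t) * Real.sinh (c * t)) ≤
      C * Real.exp (-(κ * t)) := by
  obtain ⟨C, hC, hCle⟩ := exists_sq_div_sinh_mul_sinh_le_exp ha hb
    (κ := (κ + a + b - c) / 2) (by linarith)
  obtain ⟨D, hD, hDle⟩ := exists_div_sinh_mul_le_exp hc (κ := (κ + c - a - b) / 2) (by linarith)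
  refine ⟨C * D, mul_pos hC hD, fun t ht => ?_⟩
  have : 0 < Real.sinh (c * t) := Real.sinh_pos_iff.2 (mul_pos hc ht)
  calc t ^ 3 / (Real.sinh (a * t) * Real.sinh (b * t) * Real.sinh (c * t))
      = t ^ 2 / (Real.sinh (a * t) * Real.sinh (b * t)) * (t / Real.sinh (c * t)) := by
        rw [pow_succ, mul_div_mul_comm]
    _ ≤ C * Real.exp (-((κ + a + b - c) / 2 * t)) *
          (D * Real.exp (-((κ + c - a - b) / 2 * t))) := by
        gcongr
        exacts [hCle t ht, hDle t ht]
    _ = C * D * Real.exp (-(κ * t)) := by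
        rw [mul_mul_mul_comm, ← Real.exp_add]
        ring_nf

theorem comparisonKernel_eq (hp : 0 < p) (hm : 0 < m) (b : ℂ) {t : ℝ} (ht : 0 < t) :
    comparisonKernel p m b t =
      (p * m * (sinh (b * t) * sinh ((p + m : ℝ) * t) - b * (p + m : ℝ) * t ^ 2) -
        b * (p + m : ℝ) * (sinh (p * t) * sinh (m * t) - p * m * t ^ 2)) /
      (p * m * t * (sinh (p * t) * sinh (m * t) * sinh ((p + m : ℝ) * t))) := by
  have hp' : (p : ℂ) ≠ 0 := ofReal_ne_zero.2 hp.ne'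
  have hm' : (m : ℂ) ≠ 0 := ofReal_ne_zero.2 hm.ne'
  have ht' : (t : ℂ) ≠ 0 := ofReal_ne_zero.2 ht.ne'
  have hsp := sinh_ofReal_mul_ne_zero hp ht
  have hsm := sinh_ofReal_mul_ne_zero hm ht
  have hsM := sinh_ofReal_mul_ne_zero (add_pos hp hm) ht
  rw [comparisonKernel]
  generalize sinh ((p : ℂ) * t) = P at *
  generalize sinh ((m : ℂ) * t) = Q at *
  generalize sinh (((p + m : ℝ) : ℂ) * t) = R at *
  push_cast
  field_simp
  ring

theorem norm_comparisonKernel_numerator_le (hp : 0 < p) (hm : 0 < m) {b : ℂ} (hb : 0 ≤ b.re)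
    {t : ℝ} (ht : 0 < t) :
    ‖p * m * (sinh (b * t) * sinh ((p + m : ℝ) * t) - b * (p + m : ℝ) * t ^ 2) -
        b * (p + m : ℝ) * (sinh (p * t) * sinh (m * t) - p * m * t ^ 2)‖ ≤
      p * m * (‖b‖ * (p + m) * (‖b‖ ^ 2 + (p + m) ^ 2 + (p ^ 2 + m ^ 2))) * t ^ 4 *
        Real.exp ((b.re + (p + m)) * t) := by
  have hM : 0 < p + m := add_pos hp hm
  have hpm := norm_sinh_mul_sinh_sub_le_of_pos hm ht (b := p) (by simpa using hp.le)
  rw [norm_real, Real.norm_of_nonneg hp.le, ofReal_re] at hpm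
  refine (norm_sub_le _ _).trans ?_
  simp only [norm_mul, norm_real, Real.norm_of_nonneg hp.le, Real.norm_of_nonneg hm.le,
    Real.norm_of_nonneg hM.le]
  calc _ ≤ p * m * (‖b‖ * (p + m) * (‖b‖ ^ 2 + (p + m) ^ 2) * t ^ 4 *
          Real.exp ((b.re + (p + m)) * t)) +
        ‖b‖ * (p + m) * (p * m * (p ^ 2 + m ^ 2) * t ^ 4 * Real.exp ((b.re + (p + m)) * t)) := by
        gcongr
        · exact norm_sinh_mul_sinh_sub_le_of_pos hM ht hb
        · refine hpm.trans ?_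
          gcongr ?_ * Real.exp (?_ * t)
          linarith
    _ = _ := by ring

theorem exists_norm_comparisonKernel_le (hp : 0 < p) (hm : 0 < m) {b : ℂ} (hb : 0 ≤ b.re) {κ : ℝ}
    (hκ : κ < p + m - b.re) :
    ∃ C, ∀ t > 0, ‖comparisonKernel p m b t‖ ≤ C * Real.exp (-(κ * t)) := by
  have hM : 0 < p + m := add_pos hp hm
  obtain ⟨C, -, hC⟩ := exists_cube_div_sinh_mul_sinh_mul_sinh_le_exp hp hm hM
    (κ := κ + (b.re + (p + m))) (by linarith)
  refine ⟨‖b‖ * (p + m) * (‖b‖ ^ 2 + (p + m) ^ 2 + (p ^ 2 + m ^ 2)) * C, fun t ht => ?_⟩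
  have := Real.sinh_pos_iff.2 (mul_pos hp ht)
  have := Real.sinh_pos_iff.2 (mul_pos hm ht)
  have := Real.sinh_pos_iff.2 (mul_pos hM ht)
  have hnum := norm_comparisonKernel_numerator_le hp hm hb ht
  set A : ℝ := ‖b‖ * (p + m) * (‖b‖ ^ 2 + (p + m) ^ 2 + (p ^ 2 + m ^ 2))
  rw [comparisonKernel_eq hp hm b ht, norm_div]
  simp only [norm_mul, norm_sinh_ofReal_mul hp ht, norm_sinh_ofReal_mul hm ht,
    norm_sinh_ofReal_mul hM ht, norm_real, Real.norm_of_nonneg hp.le, Real.norm_of_nonneg hm.le,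
    Real.norm_of_nonneg ht.le]
  calc _ ≤ p * m * A * t ^ 4 * Real.exp ((b.re + (p + m)) * t) / (p * m * t *
          (Real.sinh (p * t) * Real.sinh (m * t) * Real.sinh ((p + m) * t))) := by gcongr
    _ = A * Real.exp ((b.re + (p + m)) * t) * (t ^ 3 /
          (Real.sinh (p * t) * Real.sinh (m * t) * Real.sinh ((p + m) * t))) := by field_simp
    _ ≤ A * Real.exp ((b.re + (p + m)) * t) *
          (C * Real.exp (-((κ + (b.re + (p + m))) * t))) := by
        gcongr
        exact hC t ht
    _ = A * C * Real.exp (-(κ * t)) := by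
        rw [mul_mul_mul_comm, ← Real.exp_add]
        ring_nf

theorem exists_norm_logGammaRatio_sub_le (hp : 0 < p) (hm : 0 < m) {b : ℂ} (hb : 0 ≤ b.re)
    {η : ℝ} (hη : η < (p + m - b.re) / 2) :
    ∃ C, ∀ z : ℂ, |z.im| ≤ η → ‖logGammaRatio p m b z -
      b * (p + m) / (p * m) * logGammaRatio (p + m) (p + m) (p + m : ℝ) z‖ ≤ C := by
  obtain ⟨κ, hηκ, hκ⟩ := exists_between (show 2 * η < p + m - b.re by linarith)
  obtain ⟨C, hC⟩ := exists_norm_comparisonKernel_le hp hm hb hκ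
  refine ⟨∫ t in Set.Ioi 0, C * Real.exp (-(κ - 2 * η) * t), fun z hz => ?_⟩
  rw [logGammaRatio_sub_mul_logGammaRatio_self hp hm hb (hz.trans_lt hη)]
  refine norm_integral_le_of_norm_le
    ((exp_neg_integrableOn_Ioi 0 (sub_pos.2 hηκ)).const_mul _) ?_
  filter_upwards [ae_restrict_mem measurableSet_Ioi] with t (ht : 0 < t)
  have hcos : ‖cos (2 * t * z)‖ ≤ Real.exp (2 * t * η) := by
    refine (norm_cos_le _).trans ?_
    rw [abs_im_two_mul_ofReal_mul ht]
    gcongr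
  calc ‖cos (2 * t * z) * comparisonKernel p m b t‖
      ≤ Real.exp (2 * t * η) * (C * Real.exp (-(κ * t))) := by
        rw [norm_mul]
        gcongr
        exact hC t ht
    _ = C * Real.exp (-(κ - 2 * η) * t) := by
        rw [mul_left_comm, ← Real.exp_add]
        ring_nf

theorem cos_mul_exp_abs_re_le_norm_cosh {w : ℂ} {θ : ℝ} (hw : |w.im| ≤ θ) (hθ : θ < Real.pi / 2) :
    Real.cos θ * (Real.exp |w.re| / 2) ≤ ‖cosh w‖ := by
  have hcos : Real.cos θ ≤ Real.cos w.im := by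
    rw [← Real.cos_abs w.im]
    exact Real.cos_le_cos_of_nonneg_of_le_pi (abs_nonneg _) (by linarith [Real.pi_pos]) hw
  have hcosh : Real.exp |w.re| / 2 ≤ Real.cosh w.re := by
    rw [← Real.cosh_abs, Real.cosh_eq]
    linarith [Real.exp_pos (-|w.re|)]
  calc Real.cos θ * (Real.exp |w.re| / 2) ≤ Real.cos w.im * Real.cosh w.re := by
        gcongr
        exact Real.cos_nonneg_of_mem_Icc (abs_le.1 (hw.trans hθ.le))
    _ = (cosh w).re := by rw [re_cosh, mul_comm]
    _ ≤ ‖cosh w‖ := re_le_norm _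

theorem abs_re_add_log_le_re_log_cosh {w : ℂ} {θ : ℝ} (hw : |w.im| ≤ θ) (hθ : θ < Real.pi / 2) :
    |w.re| + Real.log (Real.cos θ / 2) ≤ (log (cosh w)).re := by
  have hcos : 0 < Real.cos θ :=
    Real.cos_pos_of_mem_Ioo ⟨by linarith [Real.pi_pos, (abs_nonneg _).trans hw], hθ⟩
  rw [log_re, ← Real.log_exp |w.re|, ← Real.log_mul (Real.exp_ne_zero _) (by positivity)]
  refine Real.log_le_log (by positivity) (le_of_eq_of_le ?_ (cos_mul_exp_abs_re_le_norm_cosh hw hθ))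
  ring

theorem exists_re_mul_log_cosh_le {θ : ℝ} (hθ : θ < Real.pi / 2) {β : ℂ} (hβ : 0 ≤ β.re) :
    ∃ C, ∀ w : ℂ, |w.im| ≤ θ → -(β * log (cosh w)).re ≤ C - β.re * |w.re| := by
  refine ⟨|β.im| * Real.pi - β.re * Real.log (Real.cos θ / 2), fun w hw => ?_⟩
  have hre := mul_le_mul_of_nonneg_left (abs_re_add_log_le_re_log_cosh hw hθ) hβ
  have him : β.im * (log (cosh w)).im ≤ |β.im| * Real.pi := by
    refine (le_abs_self _).trans ?_
    rw [abs_mul, log_im]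
    gcongr
    exact abs_arg_le_pi _
  rw [mul_re]
  linarith

theorem abs_re_pi_mul_div {a : ℝ} (ha : 0 < a) (z : ℂ) :
    |(Real.pi * z / a : ℂ).re| = Real.pi / a * |z.re| := by
  rw [pi_mul_div_ofReal, re_ofReal_mul, abs_mul, abs_of_pos (div_pos Real.pi_pos ha)]

theorem exists_norm_gammaRatio_le (hp : 0 < p) (hm : 0 < m) {b : ℂ} (hb : 0 < b.re) {η : ℝ}
    (hη : η < (p + m - b.re) / 2) :
    ∃ C > 0, ∃ k > 0, ∀ z : ℂ, |z.im| ≤ η → ‖gammaRatio p m b z‖ ≤ C * Real.exp (-k * |z.re|) := by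
  have hM : 0 < p + m := add_pos hp hm
  have : 0 < Real.pi / (p + m) := div_pos Real.pi_pos hM
  set β : ℂ := b * (p + m) / (p * m)
  have hβ : 0 < β.re := by
    have : β = ((p + m) / (p * m) : ℝ) * b := by
      push_cast
      ring
    rw [this, re_ofReal_mul]
    positivity
  obtain ⟨C, hC⟩ := exists_norm_logGammaRatio_sub_le hp hm hb.le hη
  obtain ⟨D, hD⟩ := exists_re_mul_log_cosh_le (θ := Real.pi / (p + m) * η) (by
    rw [div_mul_eq_mul_div, div_lt_iff₀ hM]
    nlinarith [Real.pi_pos]) hβ.le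
  set c := logGammaRatio (p + m) (p + m) (p + m : ℝ) 0
  refine ⟨Real.exp (C + D + (β * c).re), Real.exp_pos _, β.re * (Real.pi / (p + m)), by positivity,
    fun z hz => ?_⟩
  set w : ℂ := Real.pi * z / (p + m : ℝ)
  have hw : -(β * log (cosh w)).re ≤ D - β.re * (Real.pi / (p + m) * |z.re|) := by
    rw [← abs_re_pi_mul_div hM]
    refine hD w ?_
    rw [abs_im_pi_mul_div hM]
    gcongr
  have hdiff := (re_le_norm _).trans (hC z hz)
  rw [logGammaRatio_self hM hM (by linarith), mul_sub, sub_re, sub_re] at hdiff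
  rw [gammaRatio_eq_exp_logGammaRatio, norm_exp, ← Real.exp_add, Real.exp_le_exp]
  linarith

end Decay

section ParametricIntegral

open Filter Topology

variable {X : Type*} [MeasurableSpace X] {μ : Measure X} {f : ℂ → X → ℂ}

theorem aestronglyMeasurable_deriv_param {z : ℂ} (hmeas : ∀ᶠ w in 𝓝 z, AEStronglyMeasurable (f w) μ)
    (hdiff : ∀ᵐ a ∂μ, DifferentiableAt ℂ (fun w => f w a) z) :
    AEStronglyMeasurable (fun a => deriv (fun w => f w a) z) μ := by
  classical
  let q : ℂ → X → ℂ := fun w a =>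
    if AEStronglyMeasurable (f w) μ then slope (fun v => f v a) z w else 0
  refine aestronglyMeasurable_of_tendsto_ae (𝓝[≠] z) (f := q) (fun w => ?_) ?_
  · by_cases hw : AEStronglyMeasurable (f w) μ
    · simp only [q, hw, if_true, slope_def_module]
      exact (hw.sub hmeas.self_of_nhds).const_smul (w - z)⁻¹
    · simp only [q, hw, if_false]
      exact aestronglyMeasurable_const
  · filter_upwards [hdiff] with a ha
    refine (hasDerivAt_iff_tendsto_slope.1 ha.hasDerivAt).congr' ?_
    filter_upwards [hmeas.filter_mono nhdsWithin_le_nhds] with w hw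
    exact (if_pos hw).symm

theorem norm_deriv_le_of_forall_mem_ball {g : ℂ → ℂ} {z : ℂ} {r C : ℝ} (hr : 0 < r)
    (hg : DifferentiableOn ℂ g (Metric.ball z (2 * r)))
    (hC : ∀ w ∈ Metric.ball z (2 * r), ‖g w‖ ≤ C) {w : ℂ}
    (hw : w ∈ Metric.ball z r) : ‖deriv g w‖ ≤ C / (r / 2) := by
  have hsub : Metric.closedBall w (r / 2) ⊆ Metric.ball z (2 * r) := by
    refine Metric.closedBall_subset_ball' ?_
    linarith [Metric.mem_ball.1 hw]
  exact norm_deriv_le_of_forall_mem_sphere_norm_le (half_pos hr)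
    (hg.mono (Metric.closure_ball_subset_closedBall.trans hsub)).diffContOnCl
    fun v hv => hC v (hsub (Metric.sphere_subset_closedBall hv))

theorem differentiableOn_integral_of_locally_dominated {U : Set ℂ} (hU : IsOpen U)
    (hmeas : ∀ z ∈ U, AEStronglyMeasurable (f z) μ)
    (hdiff : ∀ᵐ a ∂μ, DifferentiableOn ℂ (fun z => f z a) U)
    (hbound : ∀ z ∈ U, ∃ V ∈ 𝓝 z, ∃ B : X → ℝ, Integrable B μ ∧
      ∀ᵐ a ∂μ, ∀ w ∈ V, ‖f w a‖ ≤ B a) :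
    DifferentiableOn ℂ (fun z => ∫ a, f z a ∂μ) U := by
  intro z hz
  obtain ⟨V, hV, B, hB, hle⟩ := hbound z hz
  obtain ⟨ε, hε, hball⟩ := Metric.mem_nhds_iff.1 (inter_mem (hU.mem_nhds hz) hV)
  have hballε : Metric.ball z (2 * (ε / 2)) ⊆ U ∩ V := by rwa [mul_div_cancel₀ _ two_ne_zero]
  have hdiffAt : ∀ᵐ a ∂μ, ∀ w ∈ U, DifferentiableAt ℂ (fun z => f z a) w := by
    filter_upwards [hdiff] with a ha w hw
    exact ha.differentiableAt (hU.mem_nhds hw)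
  have hmeas' : ∀ᶠ w in 𝓝 z, AEStronglyMeasurable (f w) μ :=
    (hU.eventually_mem hz).mono hmeas
  refine (hasDerivAt_integral_of_dominated_loc_of_deriv_le
    (F' := fun w a => deriv (fun v => f v a) w) (Metric.ball_mem_nhds z (half_pos hε)) hmeas'
    (hB.mono' (hmeas z hz) ?_) (aestronglyMeasurable_deriv_param hmeas' ?_) ?_
    (hB.div_const (ε / 2 / 2)) ?_).2.differentiableAt.differentiableWithinAt
  · filter_upwards [hle] with a ha using ha z (mem_of_mem_nhds hV)
  · filter_upwards [hdiffAt] with a ha using ha z hz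
  · filter_upwards [hdiff, hle] with a had ha w hw
    exact norm_deriv_le_of_forall_mem_ball (half_pos hε)
      (had.mono (hballε.trans Set.inter_subset_left)) (fun v hv => ha v (hballε hv).2) hw
  · filter_upwards [hdiffAt] with a ha w hw
    exact (ha w (hball (Metric.ball_subset_ball (by linarith) hw)).1).hasDerivAt

end ParametricIntegral

section EigenIntegral

open Filter Topology

/-- The integral in the definition of `J2`, as a function of complex arguments `s₀`, `s₁`. -/
noncomputable def eigenIntegral (p m : ℝ) (b : ℂ) (y : Fin 2 → ℝ) (s₀ s₁ : ℂ) : ℂ :=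
  ∫ t : ℝ, exp (I * alphaPar p m * t * (y 0 - y 1)) *
    (gammaRatio p m b (s₀ - t) * gammaRatio p m b (s₁ - t))

variable {p m : ℝ} {b : ℂ}

theorem J2_eq_exp_mul_eigenIntegral (x y : Fin 2 → ℝ) :
    J2 p m b x y =
      exp (I * alphaPar p m * y 1 * (x 0 + x 1)) * eigenIntegral p m b y (x 0) (x 1) := by
  simp only [J2, Fin.prod_univ_two]
  rfl

theorem norm_exp_I_mul_alphaPar_mul (y : Fin 2 → ℝ) (t : ℝ) :
    ‖exp (I * alphaPar p m * t * (y 0 - y 1))‖ = 1 := by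
  rw [show I * alphaPar p m * t * (y 0 - y 1) =
    ((alphaPar p m * t * (y 0 - y 1) : ℝ) : ℂ) * I by push_cast; ring]
  exact norm_exp_ofReal_mul_I _

theorem integrable_exp_neg_mul_abs {k : ℝ} (hk : 0 < k) :
    Integrable fun t : ℝ => Real.exp (-k * |t|) := by
  rw [← integrableOn_univ, ← Set.Iic_union_Ioi (a := (0 : ℝ)), integrableOn_union]
  constructor
  · refine (integrableOn_exp_mul_Iic hk 0).congr_fun (fun t ht => ?_) measurableSet_Iic
    simp only [abs_of_nonpos (Set.mem_Iic.1 ht), neg_mul_neg]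
  · refine (exp_neg_integrableOn_Ioi 0 hk).congr_fun (fun t ht => ?_) measurableSet_Ioi
    simp only [abs_of_pos (Set.mem_Ioi.1 ht)]

theorem exists_norm_gammaRatio_mul_gammaRatio_le (hp : 0 < p) (hm : 0 < m) (hb : 0 < b.re) {η : ℝ}
    (hη : η < (p + m - b.re) / 2) (R : ℝ) :
    ∃ B : ℝ → ℝ, Integrable B ∧ ∀ (t : ℝ) (s₀ s₁ : ℂ), |s₀.im| ≤ η → |s₁.im| ≤ η → |s₀.re| ≤ R →
      ‖gammaRatio p m b (s₀ - t) * gammaRatio p m b (s₁ - t)‖ ≤ B t := by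
  obtain ⟨C, hC, k, hk, hle⟩ := exists_norm_gammaRatio_le hp hm hb hη
  refine ⟨fun t => C * C * Real.exp (k * R) * Real.exp (-k * |t|),
    (integrable_exp_neg_mul_abs hk).const_mul _, fun t s₀ s₁ h₀ h₁ hR => ?_⟩
  have hbound₀ : ‖gammaRatio p m b (s₀ - t)‖ ≤ C * (Real.exp (k * R) * Real.exp (-k * |t|)) := by
    refine (hle _ (by simpa using h₀)).trans ?_
    rw [← Real.exp_add, sub_re, ofReal_re]
    gcongr
    have : |t| - R ≤ |s₀.re - t| := by
      linarith [abs_sub_abs_le_abs_sub t s₀.re, abs_sub_comm t s₀.re]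
    nlinarith
  have hbound₁ : ‖gammaRatio p m b (s₁ - t)‖ ≤ C := by
    refine (hle _ (by simpa using h₁)).trans (mul_le_of_le_one_right hC.le ?_)
    rw [Real.exp_le_one_iff]
    nlinarith [abs_nonneg (s₁ - t).re]
  calc ‖gammaRatio p m b (s₀ - t) * gammaRatio p m b (s₁ - t)‖
      ≤ C * (Real.exp (k * R) * Real.exp (-k * |t|)) * C := by
        rw [norm_mul]
        gcongr
    _ = C * C * Real.exp (k * R) * Real.exp (-k * |t|) := by ring

theorem continuous_gammaRatio_sub_ofReal (hp : 0 < p) (hm : 0 < m) (hb : 0 ≤ b.re) {s : ℂ}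
    (hs : |s.im| < (p + m - b.re) / 2) : Continuous fun t : ℝ => gammaRatio p m b (s - t) :=
  (differentiableOn_gammaRatio hp hm hb).continuousOn.comp_continuous (by fun_prop)
    fun t => by simpa using hs

theorem integrable_eigenIntegrand (hp : 0 < p) (hm : 0 < m) (hb : 0 < b.re) (y : Fin 2 → ℝ)
    {s₀ s₁ : ℂ} (h₀ : |s₀.im| < (p + m - b.re) / 2) (h₁ : |s₁.im| < (p + m - b.re) / 2) :
    Integrable fun t : ℝ => exp (I * alphaPar p m * t * (y 0 - y 1)) *
      (gammaRatio p m b (s₀ - t) * gammaRatio p m b (s₁ - t)) := by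
  obtain ⟨B, hB, hle⟩ :=
    exists_norm_gammaRatio_mul_gammaRatio_le hp hm hb (max_lt h₀ h₁) |s₀.re|
  have hcont₀ := continuous_gammaRatio_sub_ofReal hp hm hb.le h₀
  have hcont₁ := continuous_gammaRatio_sub_ofReal hp hm hb.le h₁
  refine hB.mono' (by fun_prop) (.of_forall fun t => ?_)
  rw [norm_mul, norm_exp_I_mul_alphaPar_mul, one_mul]
  exact hle t s₀ s₁ (le_max_left _ _) (le_max_right _ _) le_rfl

theorem differentiableOn_eigenIntegral_comp (hp : 0 < p) (hm : 0 < m) (hb : 0 < b.re)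
    (y : Fin 2 → ℝ) {U : Set ℂ} (hU : IsOpen U) {σ₀ σ₁ : ℂ → ℂ} (hσ₀ : DifferentiableOn ℂ σ₀ U)
    (hσ₁ : DifferentiableOn ℂ σ₁ U) (h₀ : ∀ r ∈ U, |(σ₀ r).im| < (p + m - b.re) / 2)
    (h₁ : ∀ r ∈ U, |(σ₁ r).im| < (p + m - b.re) / 2) :
    DifferentiableOn ℂ (fun r => eigenIntegral p m b y (σ₀ r) (σ₁ r)) U := by
  have hW := differentiableOn_gammaRatio hp hm hb.le
  refine differentiableOn_integral_of_locally_dominated hU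
    (fun r hr => (integrable_eigenIntegrand hp hm hb y (h₀ r hr) (h₁ r hr)).aestronglyMeasurable)
    (.of_forall fun t => ?_) fun r hr => ?_
  · exact .const_mul ((hW.comp (hσ₀.sub_const _) fun r hr => by simpa using h₀ r hr).mul
      (hW.comp (hσ₁.sub_const _) fun r hr => by simpa using h₁ r hr)) _
  · obtain ⟨η, hrη, hη⟩ := exists_between (max_lt (h₀ r hr) (h₁ r hr))
    obtain ⟨B, hB, hle⟩ :=
      exists_norm_gammaRatio_mul_gammaRatio_le hp hm hb hη (|(σ₀ r).re| + 1)
    have hcont₀ := (hσ₀.continuousOn).continuousAt (hU.mem_nhds hr)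
    have hcont₁ := (hσ₁.continuousOn).continuousAt (hU.mem_nhds hr)
    have him₀ : ∀ᶠ w in 𝓝 r, |(σ₀ w).im| < η :=
      hcont₀.eventually ((isOpen_abs_im_lt η).mem_nhds ((le_max_left _ _).trans_lt hrη))
    have him₁ : ∀ᶠ w in 𝓝 r, |(σ₁ w).im| < η :=
      hcont₁.eventually ((isOpen_abs_im_lt η).mem_nhds ((le_max_right _ _).trans_lt hrη))
    have hre₀ : ∀ᶠ w in 𝓝 r, |(σ₀ w).re| < |(σ₀ r).re| + 1 :=
      (continuous_re.continuousAt.comp hcont₀).abs.eventually_lt_const (lt_add_one _)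
    refine ⟨_, him₀.and (him₁.and hre₀), B, hB, .of_forall fun t w ⟨hw₀, hw₁, hw⟩ => ?_⟩
    rw [norm_mul, norm_exp_I_mul_alphaPar_mul, one_mul]
    exact hle t _ _ hw₀.le hw₁.le hw.le

theorem eigenIntegral_add_ofReal (y : Fin 2 → ℝ) (s₀ s₁ : ℂ) (u : ℝ) :
    eigenIntegral p m b y (s₀ + u) (s₁ + u) =
      exp (I * alphaPar p m * u * (y 0 - y 1)) * eigenIntegral p m b y s₀ s₁ := by
  rw [eigenIntegral, ← integral_add_right_eq_self _ u, eigenIntegral, ← integral_const_mul]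
  congr with t
  rw [ofReal_add, add_sub_add_right_eq_sub, add_sub_add_right_eq_sub, mul_add, add_mul, exp_add]
  ring

theorem sinh_sub_mul_cosh_mul_cosh_add (a₀ a₁ b₀ b₁ : ℂ) :
    sinh (b₀ - a₁) * (cosh a₀ * cosh b₁) + sinh (a₀ - b₁) * (cosh b₀ * cosh a₁) =
      sinh (a₀ - a₁) * (cosh b₀ * cosh b₁) + sinh (b₀ - b₁) * (cosh a₀ * cosh a₁) := by
  simp only [sinh_sub]
  ring

theorem exists_gammaRatio_eq_mul_cosh (hp : 0 < p) (hm : 0 < m) (hb : 0 ≤ b.re) {u : ℂ}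
    (hu : |u.im| < (p - b.re) / 2) :
    ∃ ω, gammaRatio p m b (u - I * m / 2) = ω * cosh (Real.pi * (u + I * b / 2) / p) ∧
      gammaRatio p m b (u + I * m / 2) = ω * cosh (Real.pi * (u - I * b / 2) / p) := by
  have hcosh : cosh (Real.pi * (u + I * b / 2) / p) ≠ 0 :=
    cosh_pi_mul_div_ne_zero hp (abs_im_add_I_mul_lt hb hu)
  refine ⟨gammaRatio p m b (u - I * m / 2) / cosh (Real.pi * (u + I * b / 2) / p),
    (div_mul_cancel₀ _ hcosh).symm, ?_⟩
  rw [div_mul_eq_mul_div, eq_div_iff hcosh, gammaRatio_mul_cosh hp hm hb hu]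

theorem gammaRatio_mul_gammaRatio_relation (hp : 0 < p) (hm : 0 < m) (hb : 0 ≤ b.re) {u₀ u₁ : ℂ}
    (h₀ : |u₀.im| < (p - b.re) / 2) (h₁ : |u₁.im| < (p - b.re) / 2) :
    sinh (Real.pi * (u₀ - u₁ - I * b) / p) *
          (gammaRatio p m b (u₀ - I * m / 2) * gammaRatio p m b (u₁ + I * m / 2)) -
        sinh (Real.pi * (u₁ - u₀ - I * b) / p) *
          (gammaRatio p m b (u₀ + I * m / 2) * gammaRatio p m b (u₁ - I * m / 2)) =
      sinh (Real.pi * (u₀ - u₁) / p) *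
        (gammaRatio p m b (u₀ + I * m / 2) * gammaRatio p m b (u₁ + I * m / 2) +
          gammaRatio p m b (u₀ - I * m / 2) * gammaRatio p m b (u₁ - I * m / 2)) := by
  obtain ⟨ω₀, hminus₀, hplus₀⟩ := exists_gammaRatio_eq_mul_cosh hp hm hb h₀
  obtain ⟨ω₁, hminus₁, hplus₁⟩ := exists_gammaRatio_eq_mul_cosh hp hm hb h₁
  have htrig := sinh_sub_mul_cosh_mul_cosh_add (Real.pi * (u₀ + I * b / 2) / p)
    (Real.pi * (u₁ + I * b / 2) / p) (Real.pi * (u₀ - I * b / 2) / p)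
    (Real.pi * (u₁ - I * b / 2) / p)
  simp only [← sub_div, ← mul_sub] at htrig
  rw [show u₀ - I * b / 2 - (u₁ + I * b / 2) = u₀ - u₁ - I * b by ring,
    show u₀ + I * b / 2 - (u₁ - I * b / 2) = -(u₁ - u₀ - I * b) by ring, mul_neg, neg_div, sinh_neg,
    add_sub_add_right_eq_sub, sub_sub_sub_cancel_right] at htrig
  rw [hminus₀, hplus₀, hminus₁, hplus₁]
  linear_combination ω₀ * ω₁ * htrig

theorem abs_im_sub_I_mul_half_lt (hm : 0 ≤ m) {s : ℂ} (hs : |s.im| < (p - b.re) / 2) :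
    |(s - I * m / 2).im| < (p + m - b.re) / 2 :=
  abs_im_sub_I_mul_lt (by simpa using hm) (hs.trans_eq (by rw [ofReal_re]; ring))

theorem abs_im_add_I_mul_half_lt (hm : 0 ≤ m) {s : ℂ} (hs : |s.im| < (p - b.re) / 2) :
    |(s + I * m / 2).im| < (p + m - b.re) / 2 :=
  abs_im_add_I_mul_lt (by simpa using hm) (hs.trans_eq (by rw [ofReal_re]; ring))

theorem eigenIntegral_relation (hp : 0 < p) (hm : 0 < m) (hb : 0 < b.re) (y : Fin 2 → ℝ)
    {s₀ s₁ : ℂ} (h₀ : |s₀.im| < (p - b.re) / 2) (h₁ : |s₁.im| < (p - b.re) / 2) :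
    sinh (Real.pi * (s₀ - s₁ - I * b) / p) *
          eigenIntegral p m b y (s₀ - I * m / 2) (s₁ + I * m / 2) -
        sinh (Real.pi * (s₁ - s₀ - I * b) / p) *
          eigenIntegral p m b y (s₀ + I * m / 2) (s₁ - I * m / 2) =
      sinh (Real.pi * (s₀ - s₁) / p) *
        (eigenIntegral p m b y (s₀ + I * m / 2) (s₁ + I * m / 2) +
          eigenIntegral p m b y (s₀ - I * m / 2) (s₁ - I * m / 2)) := by
  have hsub := @abs_im_sub_I_mul_half_lt p m b hm.le
  have hadd := @abs_im_add_I_mul_half_lt p m b hm.le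
  have hint := @integrable_eigenIntegrand p m b hp hm hb y
  simp only [eigenIntegral]
  rw [← integral_add (hint (hadd h₀) (hadd h₁)) (hint (hsub h₀) (hsub h₁)),
    ← integral_const_mul, ← integral_const_mul, ← integral_const_mul,
    ← integral_sub ((hint (hsub h₀) (hadd h₁)).const_mul _)
      ((hint (hadd h₀) (hsub h₁)).const_mul _)]
  congr with t
  have hrel := gammaRatio_mul_gammaRatio_relation hp hm hb.le (u₀ := s₀ - t) (u₁ := s₁ - t)
    (by simpa using h₀) (by simpa using h₁)
  rw [sub_sub_sub_cancel_right, sub_sub_sub_cancel_right] at hrel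
  simp only [sub_right_comm _ _ (t : ℂ), add_sub_right_comm _ _ (t : ℂ)]
  linear_combination exp (I * alphaPar p m * t * (y 0 - y 1)) * hrel

end EigenIntegral

section Continuation

theorem eqOn_of_forall_ofReal_eq {U : Set ℂ} (hU : IsOpen U) (hconn : IsPreconnected U)
    (h0 : 0 ∈ U) {f g : ℂ → ℂ} (hf : DifferentiableOn ℂ f U) (hg : DifferentiableOn ℂ g U)
    (hfg : ∀ r : ℝ, f r = g r) : Set.EqOn f g U := by
  refine (hf.analyticOnNhd hU).eqOn_of_preconnected_of_frequently_eq
    (hg.analyticOnNhd hU) hconn h0 ?_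
  have hofReal : Filter.Tendsto ((↑) : ℝ → ℂ) (nhdsWithin 0 {0}ᶜ) (nhdsWithin 0 {0}ᶜ) :=
    continuous_ofReal.continuousWithinAt.tendsto_nhdsWithin fun r hr => by simpa using hr
  exact hofReal.frequently (.of_forall hfg)

/-- The affine map `r ↦ Re z + r Im z`, which is real on the real line and equal to `z` at `I`. -/
noncomputable def reAddImMul (z r : ℂ) : ℂ := z.re + z.im * r

theorem differentiable_reAddImMul (z : ℂ) : Differentiable ℂ (reAddImMul z) := by
  unfold reAddImMul
  fun_prop

theorem reAddImMul_I (z : ℂ) : reAddImMul z I = z :=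
  re_add_im z

theorem reAddImMul_ofReal (z : ℂ) (r : ℝ) : reAddImMul z r = (z.re + z.im * r : ℝ) := by
  rw [reAddImMul]
  push_cast
  rfl

theorem convex_abs_im_reAddImMul_lt (z : ℂ) (η : ℝ) : Convex ℝ {r | |(reAddImMul z r).im| < η} := by
  have : ∀ r, (reAddImMul z r).im = (z.im • r).im := fun r => by simp [reAddImMul]
  simp only [this]
  exact (convex_abs_im_lt η).smul_preimage z.im

variable {p m : ℝ} {b : ℂ}

theorem J2_add_right (x y : Fin 2 → ℝ) (u : ℝ) :
    J2 p m b (fun i => x i + u) y = exp (I * alphaPar p m * ((y 0 + y 1) * u + y 1 * (x 0 + x 1))) *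
      eigenIntegral p m b y (x 0) (x 1) := by
  simp only [J2_eq_exp_mul_eigenIntegral, ofReal_add, eigenIntegral_add_ofReal]
  rw [← mul_assoc, ← exp_add]
  ring_nf

theorem eq_exp_mul_eigenIntegral (hp : 0 < p) (hm : 0 < m) (hb : 0 < b.re) {y : Fin 2 → ℝ}
    {f : (Fin 2 → ℂ) → ℂ} (hf : DifferentiableOn ℂ f {x | |(x 0 - x 1).im| < p + m - b.re})
    (hfJ2 : ∀ x : Fin 2 → ℝ, f (fun i => x i) = J2 p m b x y) {s₀ s₁ u x₀ x₁ : ℂ}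
    (h₀ : |s₀.im| < (p + m - b.re) / 2) (h₁ : |s₁.im| < (p + m - b.re) / 2)
    (hx₀ : x₀ = s₀ + u) (hx₁ : x₁ = s₁ + u) :
    f ![x₀, x₁] =
      exp (I * alphaPar p m * ((y 0 + y 1) * u + y 1 * (s₀ + s₁))) *
        eigenIntegral p m b y s₀ s₁ := by
  subst hx₀ hx₁
  let U : Set ℂ := {r | |(reAddImMul s₀ r).im| < (p + m - b.re) / 2} ∩
    {r | |(reAddImMul s₁ r).im| < (p + m - b.re) / 2}
  have hline := differentiable_reAddImMul
  have hU : IsOpen U := ((isOpen_abs_im_lt _).preimage (hline s₀).continuous).inter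
    ((isOpen_abs_im_lt _).preimage (hline s₁).continuous)
  have hUconv : Convex ℝ U :=
    (convex_abs_im_reAddImMul_lt s₀ _).inter (convex_abs_im_reAddImMul_lt s₁ _)
  have hU0 : 0 ∈ U := by simpa [U, reAddImMul] using (abs_nonneg _).trans_lt h₀
  have hUI : I ∈ U := by simpa only [U, Set.mem_inter_iff, Set.mem_ofPred_eq, reAddImMul_I]
    using ⟨h₀, h₁⟩
  have hlhs : DifferentiableOn ℂ (fun r => f ![reAddImMul s₀ r + reAddImMul u r,
      reAddImMul s₁ r + reAddImMul u r]) U := by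
    refine hf.comp (differentiable_pi.2 (Fin.forall_fin_two.2
      ⟨(hline s₀).add (hline u), (hline s₁).add (hline u)⟩)).differentiableOn fun r hr => ?_
    simp only [Set.mem_ofPred_eq, Matrix.cons_val_zero, Matrix.cons_val_one,
      add_sub_add_right_eq_sub]
    rw [sub_im]
    linarith [abs_sub (reAddImMul s₀ r).im (reAddImMul s₁ r).im, hr.1.out, hr.2.out]
  have hrhs : DifferentiableOn ℂ (fun r => exp (I * alphaPar p m * ((y 0 + y 1) * reAddImMul u r +
      y 1 * (reAddImMul s₀ r + reAddImMul s₁ r))) *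
        eigenIntegral p m b y (reAddImMul s₀ r) (reAddImMul s₁ r)) U :=
    .mul (by fun_prop) (differentiableOn_eigenIntegral_comp hp hm hb y hU
      (hline s₀).differentiableOn (hline s₁).differentiableOn (fun r hr => hr.1) fun r hr => hr.2)
  have hext := eqOn_of_forall_ofReal_eq hU hUconv.isPreconnected hU0 hlhs hrhs (fun r => ?_) hUI
  · simpa only [reAddImMul_I] using hext
  · simp only [reAddImMul_ofReal]
    have hJ2 := J2_add_right (p := p) (m := m) (b := b)
      ![s₀.re + s₀.im * r, s₁.re + s₁.im * r] y (u.re + u.im * r)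
    simp only [← hfJ2, Matrix.cons_val_zero, Matrix.cons_val_one] at hJ2
    rw [← hJ2]
    congr 1
    ext i
    fin_cases i <;> simp

end Continuation

section EigenvalueEquations

variable {p m : ℝ} {b : ℂ} {y : Fin 2 → ℝ} {f : (Fin 2 → ℂ) → ℂ} {x : Fin 2 → ℂ}

theorem exp_mul_exp_I_mul_alphaPar_mul_add (hp : p ≠ 0) (hm : m ≠ 0) (c : ℝ) (w : ℂ) :
    exp (2 * Real.pi * c / p : ℝ) * exp (I * alphaPar p m * (w + c * (I * m))) =
      exp (I * alphaPar p m * w) := by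
  have hshift : I * alphaPar p m * (c * (I * m)) = -(2 * Real.pi * c / p : ℝ) := by
    have hp' : (p : ℂ) ≠ 0 := ofReal_ne_zero.2 hp
    have hm' : (m : ℂ) ≠ 0 := ofReal_ne_zero.2 hm
    rw [alphaPar]
    push_cast
    field_simp
    rw [I_sq]
    ring
  rw [mul_add, hshift, exp_add, exp_neg]
  field_simp

theorem exists_eq_add_and_abs_im_lt {η : ℝ} (hx : |(x 0 - x 1).im| < η) :
    ∃ s₀ s₁ u : ℂ, |s₀.im| < η / 2 ∧ |s₁.im| < η / 2 ∧ x = ![s₀ + u, s₁ + u] := by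
  let u : ℂ := ((x 0 + x 1).im / 2 : ℝ) * I
  have him₀ : (x 0 - u).im = (x 0 - x 1).im / 2 := by
    simp only [u, sub_im, add_im, im_ofReal_mul, I_im]
    ring
  have him₁ : (x 1 - u).im = -((x 0 - x 1).im / 2) := by
    simp only [u, sub_im, add_im, im_ofReal_mul, I_im]
    ring
  refine ⟨x 0 - u, x 1 - u, u, ?_, ?_, ?_⟩
  · rw [him₀, abs_div, abs_two]
    linarith
  · rw [him₁, abs_neg, abs_div, abs_two]
    linarith
  · ext i
    fin_cases i <;> simp

theorem sinh_mul_shift_zero_sub_sinh_mul_shift_one (hp : 0 < p) (hm : 0 < m) (hb : 0 < b.re)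
    (hf : DifferentiableOn ℂ f {x | |(x 0 - x 1).im| < p + m - b.re})
    (hfJ2 : ∀ x : Fin 2 → ℝ, f (fun i => x i) = J2 p m b x y)
    (hx : |(x 0 - x 1).im| < p - b.re) :
    sinh (Real.pi * (x 0 - x 1 - I * b) / p) * f ![x 0 - I * m, x 1] -
        sinh (Real.pi * (x 1 - x 0 - I * b) / p) * f ![x 0, x 1 - I * m] =
      sinh (Real.pi * (x 0 - x 1) / p) *
        ((exp (2 * Real.pi * y 0 / p : ℝ) + exp (2 * Real.pi * y 1 / p : ℝ)) * f x) := by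
  obtain ⟨s₀, s₁, u, h₀, h₁, rfl⟩ := exists_eq_add_and_abs_im_lt hx
  have hf_eq := @eq_exp_mul_eigenIntegral p m b hp hm hb y f hf hfJ2
  have hsub := @abs_im_sub_I_mul_half_lt p m b hm.le
  have hadd := @abs_im_add_I_mul_half_lt p m b hm.le
  set phase := exp (I * alphaPar p m * ((y 0 + y 1) * (u - I * m / 2) + y 1 * (s₀ + s₁)))
    with hphase
  have hshift₀ : f ![s₀ + u - I * m, s₁ + u] =
      phase * eigenIntegral p m b y (s₀ - I * m / 2) (s₁ + I * m / 2) := by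
    rw [hf_eq (u := u - I * m / 2) (hsub h₀) (hadd h₁) (by ring) (by ring), sub_add_add_cancel]
  have hshift₁ : f ![s₀ + u, s₁ + u - I * m] =
      phase * eigenIntegral p m b y (s₀ + I * m / 2) (s₁ - I * m / 2) := by
    rw [hf_eq (u := u - I * m / 2) (hadd h₀) (hsub h₁) (by ring) (by ring), add_add_sub_cancel]
  have hplus : exp (2 * Real.pi * y 1 / p : ℝ) * f ![s₀ + u, s₁ + u] =
      phase * eigenIntegral p m b y (s₀ + I * m / 2) (s₁ + I * m / 2) := by
    rw [hphase, ← exp_mul_exp_I_mul_alphaPar_mul_add hp.ne' hm.ne' (y 1), mul_assoc (exp _),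
      hf_eq (u := u - I * m / 2) (hadd h₀) (hadd h₁) (by ring) (by ring)]
    congr 4
    ring
  have hminus : exp (2 * Real.pi * y 0 / p : ℝ) * f ![s₀ + u, s₁ + u] =
      phase * eigenIntegral p m b y (s₀ - I * m / 2) (s₁ - I * m / 2) := by
    rw [hphase, ← exp_mul_exp_I_mul_alphaPar_mul_add hp.ne' hm.ne' (y 0), mul_assoc (exp _),
      hf_eq (u := u + I * m / 2) (hsub h₀) (hsub h₁) (by ring) (by ring)]
    congr 4
    ring
  simp only [Matrix.cons_val_zero, Matrix.cons_val_one, add_sub_add_right_eq_sub]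
  rw [hshift₀, hshift₁, add_mul, hplus, hminus]
  linear_combination phase * eigenIntegral_relation hp hm hb y h₀ h₁

theorem shift_both_eq (hp : 0 < p) (hm : 0 < m) (hb : 0 < b.re)
    (hf : DifferentiableOn ℂ f {x | |(x 0 - x 1).im| < p + m - b.re})
    (hfJ2 : ∀ x : Fin 2 → ℝ, f (fun i => x i) = J2 p m b x y)
    (hx : |(x 0 - x 1).im| < p + m - b.re) :
    f ![x 0 - I * m, x 1 - I * m] = exp (2 * Real.pi * (y 0 + y 1) / p : ℝ) * f x := by
  obtain ⟨s₀, s₁, u, h₀, h₁, rfl⟩ := exists_eq_add_and_abs_im_lt hx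
  have hf_eq := fun {u x₀ x₁} =>
    eq_exp_mul_eigenIntegral (u := u) (x₀ := x₀) (x₁ := x₁) hp hm hb hf hfJ2 h₀ h₁
  simp only [Matrix.cons_val_zero, Matrix.cons_val_one]
  rw [hf_eq (add_sub_assoc ..) (add_sub_assoc ..), hf_eq rfl rfl, ← mul_assoc,
    ← exp_mul_exp_I_mul_alphaPar_mul_add hp.ne' hm.ne' (y 0 + y 1)]
  congr 4
  push_cast
  ring


theorem alphaPar_comm (p m : ℝ) : alphaPar p m = alphaPar m p := by
  rw [alphaPar, alphaPar, mul_comm p]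

theorem Ghyp_comm (p m : ℝ) : Ghyp p m = Ghyp m p := by
  ext z
  rw [Ghyp, Ghyp, ghyp, ghyp]
  congr! 4 with t
  ring

theorem J2_comm (p m : ℝ) : J2 p m = J2 m p := by
  ext b x y
  rw [J2, J2, alphaPar_comm, Ghyp_comm]

theorem eigenvalue_equations (hp : 0 < p) (hm : 0 < m) (hb : 0 < b.re)
    (hf : DifferentiableOn ℂ f {x | |(x 0 - x 1).im| < p + m - b.re})
    (hfJ2 : ∀ x : Fin 2 → ℝ, f (fun i => x i) = J2 p m b x y)
    (hx : |(x 0 - x 1).im| < p - b.re) :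
    (sinh (Real.pi * (x 0 - x 1) / p) ≠ 0 →
      sinh (Real.pi * (x 0 - x 1 - I * b) / p) / sinh (Real.pi * (x 0 - x 1) / p) *
            f ![x 0 - I * m, x 1] +
          sinh (Real.pi * (x 1 - x 0 - I * b) / p) / sinh (Real.pi * (x 1 - x 0) / p) *
            f ![x 0, x 1 - I * m] =
        (exp (2 * Real.pi * y 0 / p : ℝ) + exp (2 * Real.pi * y 1 / p : ℝ)) * f x) ∧
    f ![x 0 - I * m, x 1 - I * m] = exp (2 * Real.pi * (y 0 + y 1) / p : ℝ) * f x := by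
  refine ⟨fun hsinh => ?_, shift_both_eq hp hm hb hf hfJ2 (by linarith)⟩
  have hneg : sinh (Real.pi * (x 1 - x 0) / p) = -sinh (Real.pi * (x 0 - x 1) / p) := by
    rw [← sinh_neg, ← neg_div, ← mul_neg, neg_sub]
  refine mul_left_cancel₀ hsinh ?_
  rw [← sinh_mul_shift_zero_sub_sinh_mul_shift_one hp hm hb hf hfJ2 hx, hneg, mul_add,
    ← mul_assoc, ← mul_assoc, mul_div_cancel₀ _ hsinh, div_neg, mul_neg, mul_div_cancel₀ _ hsinh,
    neg_mul, ← sub_eq_add_neg]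

theorem statement12_general {ap am : ℝ} (hap : 0 < ap) (ham : 0 < am) (hb : 0 < b.re)
    (hf : DifferentiableOn ℂ f {x | |(x 0 - x 1).im| < ap + am - b.re})
    (hfJ2 : ∀ x : Fin 2 → ℝ, f (fun i => x i) = J2 ap am b x y)
    {c d : ℝ} (hcd : (c, d) = (ap, am) ∨ (c, d) = (am, ap)) (hx : |(x 0 - x 1).im| < c - b.re) :
    (sinh (Real.pi * (x 0 - x 1) / c) ≠ 0 →
      sinh (Real.pi * (x 0 - x 1 - I * b) / c) / sinh (Real.pi * (x 0 - x 1) / c) *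
            f ![x 0 - I * d, x 1] +
          sinh (Real.pi * (x 1 - x 0 - I * b) / c) / sinh (Real.pi * (x 1 - x 0) / c) *
            f ![x 0, x 1 - I * d] =
        (exp (2 * Real.pi * y 0 / c : ℝ) + exp (2 * Real.pi * y 1 / c : ℝ)) * f x) ∧
    f ![x 0 - I * d, x 1 - I * d] = exp (2 * Real.pi * (y 0 + y 1) / c : ℝ) * f x := by
  rcases hcd with h | h <;> obtain ⟨rfl, rfl⟩ := Prod.mk.inj h
  · exact eigenvalue_equations hap ham hb hf hfJ2 hx
  · rw [add_comm] at hf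
    rw [J2_comm] at hfJ2
    exact eigenvalue_equations ham hap hb hf hfJ2 hx

end EigenvalueEquations

/-- Prop. 4.2: the holomorphic extension `F` of `J₂(·;·,y)` to `D₂` satisfies
the joint eigenvalue equations of the two commuting Calogero–Moser A∆Os, for
`Re b ∈ (0,a_s)` and `|Im(x₁−x₂)| < a_s − Re b`. Here `(c,d)` runs over
`(a₊,a₋), (a₋,a₊)`, corresponding to `δ = +,−` with `c = a_δ`, `d = a_{−δ}`. -/
theorem statement12 (ap am : ℝ) (hap : 0 < ap) (ham : 0 < am) (y : Fin 2 → ℝ)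
    (F : ℂ × (Fin 2 → ℂ) → ℂ)
    (hFhol : DifferentiableOn ℂ F (D2 ap am))
    (hFagree : ∀ b : ℂ, 0 < b.re → b.re < ap + am → ∀ x : Fin 2 → ℝ,
      F (b, fun i => (x i : ℂ)) = J2 ap am b x y) :
    ∀ b : ℂ, 0 < b.re → b.re < min ap am →
    ∀ x : Fin 2 → ℂ, |(x 0 - x 1).im| < min ap am - b.re →
    ∀ c d : ℝ, ((c, d) = (ap, am) ∨ (c, d) = (am, ap)) →
      ((Complex.sinh ((Real.pi : ℂ) * (x 0 - x 1) / (c : ℂ)) ≠ 0 →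
        Complex.sinh ((Real.pi : ℂ) * (x 0 - x 1 - Complex.I * b) / (c : ℂ)) /
            Complex.sinh ((Real.pi : ℂ) * (x 0 - x 1) / (c : ℂ)) *
            F (b, ![x 0 - Complex.I * (d : ℂ), x 1]) +
          Complex.sinh ((Real.pi : ℂ) * (x 1 - x 0 - Complex.I * b) / (c : ℂ)) /
            Complex.sinh ((Real.pi : ℂ) * (x 1 - x 0) / (c : ℂ)) *
            F (b, ![x 0, x 1 - Complex.I * (d : ℂ)])
        = (Complex.exp (((2 * Real.pi * y 0 / c : ℝ) : ℂ)) +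
            Complex.exp (((2 * Real.pi * y 1 / c : ℝ) : ℂ))) * F (b, x)) ∧
      F (b, ![x 0 - Complex.I * (d : ℂ), x 1 - Complex.I * (d : ℂ)])
        = Complex.exp (((2 * Real.pi * (y 0 + y 1) / c : ℝ) : ℂ)) * F (b, x)) := by
  intro b hb hbmin x hx c d hcd
  have hb' : b.re < ap + am := (lt_min_iff.1 hbmin).1.trans_le (le_add_of_nonneg_right ham.le)
  have hslice : DifferentiableOn ℂ (fun x => F (b, x)) {x | |(x 0 - x 1).im| < ap + am - b.re} :=
    hFhol.comp (by fun_prop) fun x hx => ⟨⟨hb, hb'⟩, hx⟩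
  have hmin : min ap am ≤ c := by
    rcases hcd with h | h <;> simp [(Prod.mk.inj h).1]
  exact statement12_general hap ham hb hslice (hFagree b hb hb') hcd (by linarith)
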